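/- arXiv:1710.03625 — 9 statements merged into one kernel-verified Lean document; each statement's English description precedes it below -/
import Mathlib

section
/- Let X be a real Banach space and S ⊆ ℝⁿ (n ≥ 1, with the Euclidean norm) a convex compact subset with nonempty interior. Then S is uniformly convex if and only if the set of extreme points of S coincides with the topological boundary of S, i.e. extr S = fr S. -/
open Metric Set
open scoped NNReal ENNReal

/-- The modulus of convexity of a set `S` in a real normed space:
`δ_S(ε) = sup{δ ≥ 0 : B((x₁+x₂)/2, δ) ⊆ S for all x₁, x₂ ∈ S with ‖x₁ − x₂‖ = ε}`. -/
noncomputable def setModulus {X : Type*} [NormedAddCommGroup X] [NormedSpace ℝ X]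
    (S : Set X) (ε : ℝ) : ℝ :=
  sSup {δ : ℝ | 0 ≤ δ ∧ ∀ x₁ ∈ S, ∀ x₂ ∈ S, ‖x₁ - x₂‖ = ε →
    closedBall (midpoint ℝ x₁ x₂) δ ⊆ S}

/-- The exact bound of Lipschitz continuity of `h` on `U`:
the infimum of all Lipschitz constants of `h` on `U`. -/
noncomputable def lipOn {α β : Type*} [PseudoMetricSpace α] [PseudoMetricSpace β]
    (h : α → β) (U : Set α) : ℝ :=
  sInf {ℓ : ℝ | 0 ≤ ℓ ∧ ∀ x₁ ∈ U, ∀ x₂ ∈ U, dist (h x₁) (h x₂) ≤ ℓ * dist x₁ x₂}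

/-- The exact regularity bound of `f` around `x₀`: the infimum of all `κ ≥ 0` such that,
for some `δ > 0`, `dist(x, f⁻¹(y)) ≤ κ‖y − f(x)‖` for all `x ∈ B(x₀, δ)`, `y ∈ B(f(x₀), δ)`;
it equals `+∞` when `f` is not metrically regular around `x₀`. -/
noncomputable def regBound {X Y : Type*} [NormedAddCommGroup X] [NormedAddCommGroup Y]
    (f : X → Y) (x₀ : X) : ℝ≥0∞ :=
  sInf (ENNReal.ofReal '' {κ : ℝ | 0 ≤ κ ∧ ∃ δ > 0,
    ∀ x ∈ closedBall x₀ δ, ∀ y ∈ closedBall (f x₀) δ,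
      Metric.infDist x {x' | f x' = y} ≤ κ * ‖y - f x‖})

/-- `S ∈ U_c(X)`: `S` is a nonempty closed convex set whose modulus of convexity
satisfies `δ_S(ε) ≥ cε²` for all `ε ∈ (0, diam S)`. -/
def UniformlyConvexWith {X : Type*} [NormedAddCommGroup X] [NormedSpace ℝ X]
    (c : ℝ) (S : Set X) : Prop :=
  S.Nonempty ∧ IsClosed S ∧ Convex ℝ S ∧
    ∀ ε : ℝ, 0 < ε → ε < Metric.diam S → c * ε ^ 2 ≤ setModulus S ε

/-- The modulus of convexity of a normed space
`δ_X(ε) = inf{1 − ‖(x₁+x₂)/2‖ : x₁, x₂ ∈ B̄(0,1), ‖x₁ − x₂‖ = ε}`. -/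
noncomputable def spaceModulus (X : Type*) [NormedAddCommGroup X] [NormedSpace ℝ X]
    (ε : ℝ) : ℝ :=
  sInf {d : ℝ | ∃ x₁ ∈ closedBall (0 : X) 1, ∃ x₂ ∈ closedBall (0 : X) 1,
    ‖x₁ - x₂‖ = ε ∧ d = 1 - ‖midpoint ℝ x₁ x₂‖}

/-- `S` is `r`-convex (strongly convex of radius `r`): a nonempty intersection
`⋂_{x ∈ M} B̄(x, r)` for some `M ⊊ X`. -/
def RConvex {X : Type*} [NormedAddCommGroup X] (r : ℝ) (S : Set X) : Prop :=
  S.Nonempty ∧ ∃ M : Set X, M ≠ Set.univ ∧ S = ⋂ x ∈ M, closedBall x r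

/-- `f` is open at a linear rate around `x₀`. -/
def OpenAtLinearRate {X Y : Type*} [PseudoMetricSpace X] [PseudoMetricSpace Y]
    (f : X → Y) (x₀ : X) : Prop :=
  ∃ δ > (0 : ℝ), ∃ ζ > (0 : ℝ), ∃ σ > (0 : ℝ), ∀ x ∈ closedBall x₀ δ, ∀ r ∈ Icc (0 : ℝ) δ,
    closedBall (f x) (σ * r) ∩ closedBall (f x₀) ζ ⊆ f '' closedBall x r

/-- A convex compact subset of `ℝⁿ` with nonempty interior is uniformly convex
iff its extreme points are exactly its boundary points. Since `S` is compact,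
its diameter is attained, so uniform convexity means `δ_S(ε) > 0` for all
`ε ∈ (0, diam S]`. -/
theorem uniformly_convex_iff_extremePoints_eq_frontier
    (n : ℕ) (hn : 1 ≤ n) (S : Set (EuclideanSpace ℝ (Fin n)))
    (hconv : Convex ℝ S) (hcomp : IsCompact S) (hint : (interior S).Nonempty) :
    (∀ ε : ℝ, 0 < ε → ε ≤ Metric.diam S → 0 < setModulus S ε) ↔
      Set.extremePoints ℝ S = frontier S := by
  classical
  haveI : Nonempty (Fin n) := ⟨⟨0, hn⟩⟩
  haveI : Nontrivial (EuclideanSpace ℝ (Fin n)) := inferInstance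
  have hcl := hcomp.isClosed
  have hbd := hcomp.isBounded
  constructor
  · intro h
    apply Set.Subset.antisymm
    · intro x hx
      refine ⟨subset_closure hx.1, fun hxi => ?_⟩
      obtain ⟨r, hr, hb⟩ := Metric.nhds_basis_closedBall.mem_iff.1 (mem_interior_iff_mem_nhds.1 hxi)
      obtain ⟨v, hv⟩ := exists_norm_eq (EuclideanSpace ℝ (Fin n)) hr.le
      have h1 : x + v ∈ S := hb (by simp [hv])
      have h2 : x - v ∈ S := hb (by simp [hv, dist_eq_norm])
      have h3 : x ∈ openSegment ℝ (x + v) (x - v) :=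
        ⟨1/2, 1/2, by norm_num, by norm_num, by norm_num, by module⟩
      have := hx.2 h1 h2 h3
      have hv0 : v = 0 := by simpa using this
      rw [hv0, norm_zero] at hv
      exact hr.ne hv
    · intro x hx
      have hxS : x ∈ S := hcl.frontier_subset hx
      refine ⟨hxS, fun x₁ h₁ x₂ h₂ hseg => ?_⟩
      by_contra hne
      obtain ⟨a, b, ha, hb, hab, rfl⟩ := hseg
      have hne' : x₁ - x₂ ≠ 0 := by
        intro h0
        have : x₁ = x₂ := sub_eq_zero.1 h0
        subst this
        exact hne (by rw [← add_smul, hab, one_smul])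
      obtain ⟨t, ht, hta, htb⟩ : ∃ t : ℝ, 0 < t ∧ t ≤ a ∧ t ≤ b :=
        ⟨min a b, lt_min ha hb, min_le_left _ _, min_le_right _ _⟩
      have hy1 : (a + t) • x₁ + (b - t) • x₂ ∈ S :=
        hconv h₁ h₂ (by linarith) (by linarith) (by linarith)
      have hy2 : (a - t) • x₁ + (b + t) • x₂ ∈ S :=
        hconv h₁ h₂ (by linarith) (by linarith) (by linarith)
      have hpos := h ‖((a + t) • x₁ + (b - t) • x₂) - ((a - t) • x₁ + (b + t) • x₂)‖ (by
        rw [norm_pos_iff]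
        have : ((a + t) • x₁ + (b - t) • x₂) - ((a - t) • x₁ + (b + t) • x₂)
          = (2 * t) • (x₁ - x₂) := by module
        rw [this]
        exact smul_ne_zero (by positivity) hne')
        (by rw [← dist_eq_norm]; exact Metric.dist_le_diam_of_mem hbd hy1 hy2)
      unfold setModulus at hpos
      have hnem : Set.Nonempty {δ : ℝ | 0 ≤ δ ∧ ∀ z₁ ∈ S, ∀ z₂ ∈ S, ‖z₁ - z₂‖ =
          ‖((a + t) • x₁ + (b - t) • x₂) - ((a - t) • x₁ + (b + t) • x₂)‖ →
          closedBall (midpoint ℝ z₁ z₂) δ ⊆ S} := by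
        by_contra hE
        rw [Set.not_nonempty_iff_eq_empty.1 hE, Real.sSup_empty] at hpos
        exact lt_irrefl _ hpos
      obtain ⟨δ, ⟨-, hδ⟩, hδ0⟩ := exists_lt_of_lt_csSup hnem hpos
      have hball := hδ _ hy1 _ hy2 rfl
      have hm : midpoint ℝ ((a + t) • x₁ + (b - t) • x₂) ((a - t) • x₁ + (b + t) • x₂)
          = a • x₁ + b • x₂ := by
        rw [midpoint_eq_smul_add, invOf_eq_inv]; module
      rw [hm] at hball
      exact hx.2 (mem_interior_iff_mem_nhds.2
        (Filter.mem_of_superset (Metric.closedBall_mem_nhds _ hδ0) hball))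
  · intro h ε hε hεd
    have hSne : S.Nonempty := hint.mono interior_subset
    obtain ⟨⟨p, q⟩, ⟨hp, hq⟩, hmax⟩ := (hcomp.prod hcomp).exists_isMaxOn (hSne.prod hSne)
      (continuous_dist.continuousOn (s := S ×ˢ S))
    have hdiam : Metric.diam S ≤ dist p q :=
      Metric.diam_le_of_forall_dist_le dist_nonneg
        (fun x hx y hy => by
          have h1 := isMaxOn_iff.1 hmax (x, y) (Set.mk_mem_prod hx hy)
          exact h1)
    have hpq : 0 < dist p q := by linarith
    let M : Set (EuclideanSpace ℝ (Fin n)) :=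
      (fun z : EuclideanSpace ℝ (Fin n) × EuclideanSpace ℝ (Fin n) => midpoint ℝ z.1 z.2) ''
        ((S ×ˢ S) ∩ {z | ‖z.1 - z.2‖ = ε})
    have hM : IsCompact M := by
      apply IsCompact.image
      · exact (hcomp.prod hcomp).inter_right
          (isClosed_eq (by fun_prop) continuous_const)
      · simp only [midpoint_eq_smul_add]
        fun_prop
    have hMi : M ⊆ interior S := by
      rintro _ ⟨⟨z₁, z₂⟩, ⟨⟨h₁, h₂⟩, hz⟩, rfl⟩
      simp only [Set.mem_setOf_eq] at h₁ h₂ hz ⊢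
      by_contra hni
      have hmS : midpoint ℝ z₁ z₂ ∈ S := hconv.midpoint_mem h₁ h₂
      have hf : midpoint ℝ z₁ z₂ ∈ frontier S := ⟨subset_closure hmS, hni⟩
      rw [← h] at hf
      have hs : midpoint ℝ z₁ z₂ ∈ openSegment ℝ z₁ z₂ :=
        ⟨1/2, 1/2, by norm_num, by norm_num, by norm_num, by
          rw [midpoint_eq_smul_add, invOf_eq_inv]; module⟩
      have e1 := hf.2 h₁ h₂ hs
      rw [eq_comm, midpoint_eq_left_iff] at e1
      rw [e1, sub_self, norm_zero] at hz
      exact hε.ne hz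
    obtain ⟨δ, hδ, hth⟩ := hM.exists_cthickening_subset_open isOpen_interior hMi
    refine lt_of_lt_of_le hδ (le_csSup ?_ ?_)
    · refine ⟨Metric.diam S, ?_⟩
      rintro d ⟨hd, hb⟩
      have hr0 : 0 ≤ ε / dist p q := by positivity
      have hr1 : ε / dist p q ≤ 1 := by rw [div_le_one hpq]; linarith
      have hy : (1 - ε / dist p q) • p + (ε / dist p q) • q ∈ S :=
        hconv hp hq (by linarith) hr0 (by ring)
      have hn' : ‖p - ((1 - ε / dist p q) • p + (ε / dist p q) • q)‖ = ε := by
        have : p - ((1 - ε / dist p q) • p + (ε / dist p q) • q)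
          = (ε / dist p q) • (p - q) := by module
        rw [this, norm_smul, Real.norm_of_nonneg hr0, ← dist_eq_norm, div_mul_cancel₀ _ hpq.ne']
      have hb' := hb _ hp _ hy hn'
      generalize midpoint ℝ p ((1 - ε / dist p q) • p + (ε / dist p q) • q) = c at hb'
      obtain ⟨v, hv⟩ := exists_norm_eq (EuclideanSpace ℝ (Fin n)) hd
      have := Metric.dist_le_diam_of_mem hbd (hb' (Metric.mem_closedBall_self hd))
        (hb' (show c + v ∈ closedBall c d by simp [hv]))
      simpa [hv] using this
    · refine ⟨hδ.le, fun x₁ h₁ x₂ h₂ hx => ?_⟩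
      exact (Metric.closedBall_subset_cthickening
        (show midpoint ℝ x₁ x₂ ∈ M from ⟨(x₁, x₂), ⟨⟨h₁, h₂⟩, hx⟩, rfl⟩) δ).trans
          (hth.trans interior_subset)
end

section
/- Let X, Y be real Banach spaces, Ω ⊆ X an open nonempty set, f : Ω → Y, x₀ ∈ Ω and c > 0. Assume: (i) for some r₀ > 0 with the open ball int B(x₀, r₀) ⊆ Ω, f is differentiable on int B(x₀, r₀) and its derivative map Df is Lipschitz continuous there; (ii) the derivative Df(x₀) : X → Y is surjective; (iii) reg(f, x₀) · lip(Df, int B(x₀, r₀)) / 8 < c. Then there exists ρ ∈ (0, r₀) such that for every set S ∈ U_c(X) with S ⊆ B(x₀, ρ) and f(S) closed, there exists c' > 0 with f(S) ∈ U_{c'}(Y); in particular f(S) is a uniformly convex subset of Y. -/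
open Metric Set
open scoped NNReal ENNReal

theorem aux_convex_of_mid {Y : Type*} [NormedAddCommGroup Y] [NormedSpace ℝ Y] {C : Set Y}
    (hC : IsClosed C) (h : ∀ x ∈ C, ∀ y ∈ C, midpoint ℝ x y ∈ C) : Convex ℝ C := by
  rw [convex_iff_segment_subset]
  intro x hx y hy z hz
  rw [segment_eq_image_lineMap] at hz
  obtain ⟨t, ht, rfl⟩ := hz
  by_contra hn
  have hcont : Continuous (fun s : ℝ => AffineMap.lineMap x y s) := AffineMap.lineMap_continuous
  have hT : IsClosed {s : ℝ | AffineMap.lineMap x y s ∈ C} := hC.preimage hcont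
  have hA : IsCompact (Icc 0 t ∩ {s : ℝ | AffineMap.lineMap x y s ∈ C}) :=
    isCompact_Icc.inter_right hT
  have hB : IsCompact (Icc t 1 ∩ {s : ℝ | AffineMap.lineMap x y s ∈ C}) :=
    isCompact_Icc.inter_right hT
  obtain ⟨a, ha, ha'⟩ := hA.exists_isGreatest ⟨0, ⟨le_rfl, ht.1⟩, by simpa using hx⟩
  obtain ⟨b, hb, hb'⟩ := hB.exists_isLeast ⟨1, ⟨ht.2, le_rfl⟩, by simpa using hy⟩
  have hat : a < t := lt_of_le_of_ne ha.1.2 (by rintro rfl; exact hn ha.2)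
  have hbt : t < b := lt_of_le_of_ne hb.1.1 (by rintro rfl; exact hn hb.2)
  have hm : AffineMap.lineMap x y (midpoint ℝ a b) ∈ C := by
    rw [AffineMap.map_midpoint]
    exact h _ ha.2 _ hb.2
  have hme : midpoint ℝ a b = (a + b) / 2 := by
    rw [midpoint_eq_smul_add]; simp; ring
  rw [hme] at hm
  have h0 := ha.1.1
  have h1 := hb.1.2
  rcases le_total ((a + b) / 2) t with hle | hle
  · have := ha' ⟨⟨by linarith, hle⟩, hm⟩
    linarith
  · have := hb' ⟨⟨hle, by linarith⟩, hm⟩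
    linarith

theorem aux_ball_subset {X : Type*} [NormedAddCommGroup X] [NormedSpace ℝ X] {S : Set X} {c : ℝ}
    (hc : 0 < c) (hS : UniformlyConvexWith c S) (hb : Bornology.IsBounded S)
    {x₁ x₂ : X} (h₁ : x₁ ∈ S) (h₂ : x₂ ∈ S) (hne : x₁ ≠ x₂) :
    ball (midpoint ℝ x₁ x₂) (c * ‖x₁ - x₂‖ ^ 2) ⊆ S := by
  obtain ⟨-, -, hconv, hmod⟩ := hS
  intro z hz
  set m := midpoint ℝ x₁ x₂ with hm
  set e := ‖x₁ - x₂‖ with he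
  have hepos : 0 < e := norm_pos_iff.2 (sub_ne_zero.2 hne)
  have hed : e ≤ diam S := by
    rw [he, ← dist_eq_norm]; exact dist_le_diam_of_mem hb h₁ h₂
  rw [mem_ball] at hz
  -- choose t < 1
  obtain ⟨t, ht0, ht1, htz⟩ : ∃ t : ℝ, 0 < t ∧ t < 1 ∧ dist z m < c * (t * e) ^ 2 := by
    have hcont : Continuous (fun t : ℝ => c * (t * e) ^ 2) := by fun_prop
    have hev : ∀ᶠ t in nhds (1 : ℝ), dist z m < c * (t * e) ^ 2 :=
      (hcont.tendsto 1).eventually_const_lt (by simpa using hz)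
    have hev2 : ∀ᶠ t in nhds (1 : ℝ), 0 < t := lt_mem_nhds one_pos
    have h3 : ∀ᶠ t in nhdsWithin (1 : ℝ) (Iio 1), dist z m < c * (t * e) ^ 2 ∧ 0 < t ∧ t < 1 := by
      filter_upwards [nhdsWithin_le_nhds hev, nhdsWithin_le_nhds hev2, self_mem_nhdsWithin] with
        t h h' h'' using ⟨h, h', h''⟩
    obtain ⟨t, h, h', h''⟩ := h3.exists
    exact ⟨t, h', h'', h⟩
  have hlt : t * e < diam S := by nlinarith
  have hmodt := hmod (t * e) (by positivity) hlt
  obtain ⟨d, ⟨-, hd⟩, hzd⟩ := exists_lt_of_lt_csSup (s := {δ : ℝ | 0 ≤ δ ∧ ∀ x₁ ∈ S, ∀ x₂ ∈ S,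
      ‖x₁ - x₂‖ = t * e → closedBall (midpoint ℝ x₁ x₂) δ ⊆ S})
    ⟨0, le_rfl, fun a ha b hb _ => by
      rw [closedBall_zero, singleton_subset_iff]
      exact hconv.midpoint_mem ha hb⟩ (lt_of_lt_of_le htz hmodt)
  have hmS : m ∈ S := hconv.midpoint_mem h₁ h₂
  have e1 : m + t • (x₁ - m) ∈ S := hconv.add_smul_sub_mem hmS h₁ ⟨ht0.le, ht1.le⟩
  have e2 : m + t • (x₂ - m) ∈ S := hconv.add_smul_sub_mem hmS h₂ ⟨ht0.le, ht1.le⟩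
  have hmm : midpoint ℝ (m + t • (x₁ - m)) (m + t • (x₂ - m)) = m := by
    simp only [hm, midpoint_eq_smul_add, invOf_eq_inv]
    module
  have := hd _ e1 _ e2 (by
    rw [show m + t • (x₁ - m) - (m + t • (x₂ - m)) = t • (x₁ - x₂) by module, norm_smul,
      Real.norm_of_nonneg ht0.le])
  rw [hmm] at this
  exact this (mem_closedBall.2 hzd.le)

theorem aux_taylor {X Y : Type*} [NormedAddCommGroup X] [NormedSpace ℝ X]
    [NormedAddCommGroup Y] [NormedSpace ℝ Y] {f : X → Y} {s : Set X} (hs : Convex ℝ s)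
    (hdiff : ∀ x ∈ s, DifferentiableAt ℝ f x) {L : ℝ}
    (hL : ∀ x₁ ∈ s, ∀ x₂ ∈ s, dist (fderiv ℝ f x₁) (fderiv ℝ f x₂) ≤ L * dist x₁ x₂)
    {x h : X} (hx : x ∈ s) (hxh : x + h ∈ s) :
    ‖f (x + h) - f x - fderiv ℝ f x h‖ ≤ L * ‖h‖ ^ 2 / 2 := by
  have hmem : ∀ t ∈ Icc (0 : ℝ) 1, x + t • h ∈ s := fun t ht =>
    hs.add_smul_mem hx hxh ht
  have hder : ∀ t ∈ Icc (0 : ℝ) 1, HasDerivAt (fun t : ℝ => f (x + t • h) - f x - t • fderiv ℝ f x h)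
      (fderiv ℝ f (x + t • h) h - fderiv ℝ f x h) t := by
    intro t ht
    have h1 : HasDerivAt (fun t : ℝ => x + t • h) h t := by
      simpa using ((hasDerivAt_id t).smul_const h).const_add x
    have h2 := (hdiff _ (hmem t ht)).hasFDerivAt.comp_hasDerivAt t h1
    have h3 : HasDerivAt (fun t : ℝ => t • fderiv ℝ f x h) (fderiv ℝ f x h) t := by
      simpa using (hasDerivAt_id t).smul_const (fderiv ℝ f x h)
    exact (h2.sub_const (f x)).sub h3
  have := image_norm_le_of_norm_deriv_right_le_deriv_boundary
    (f := fun t : ℝ => f (x + t • h) - f x - t • fderiv ℝ f x h)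
    (f' := fun t => fderiv ℝ f (x + t • h) h - fderiv ℝ f x h) (a := 0) (b := 1)
    (B := fun t => L * ‖h‖ ^ 2 / 2 * t ^ 2) (B' := fun t => L * ‖h‖ ^ 2 * t)
    (fun t ht => (hder t ht).continuousAt.continuousWithinAt)
    (fun t ht => (hder t ⟨ht.1, ht.2.le⟩).hasDerivWithinAt)
    (by simp)
    (fun t => by
      have := (hasDerivAt_pow 2 t).const_mul (L * ‖h‖ ^ 2 / 2)
      exact this.congr_deriv (by norm_num; ring))
    (fun t ht => by
      have h4 := hL _ (hmem t ⟨ht.1, ht.2.le⟩) _ hx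
      rw [dist_eq_norm, dist_eq_norm, add_sub_cancel_left, norm_smul,
        Real.norm_of_nonneg ht.1] at h4
      rw [← _root_.sub_apply]
      refine (ContinuousLinearMap.le_opNorm _ _).trans ?_
      calc _ ≤ (L * (t * ‖h‖)) * ‖h‖ := by gcongr
        _ = _ := by ring)
    (x := 1) (by simp)
  simpa using this

theorem aux_lipOn {X Z : Type*} [PseudoMetricSpace X] [PseudoMetricSpace Z] {g : X → Z} {U : Set X}
    (h : ∃ K : ℝ≥0, LipschitzOnWith K g U) :
    0 ≤ lipOn g U ∧ ∀ x₁ ∈ U, ∀ x₂ ∈ U, dist (g x₁) (g x₂) ≤ lipOn g U * dist x₁ x₂ := by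
  obtain ⟨K, hK⟩ := h
  have hne : {ℓ : ℝ | 0 ≤ ℓ ∧ ∀ x₁ ∈ U, ∀ x₂ ∈ U, dist (g x₁) (g x₂) ≤ ℓ * dist x₁ x₂}.Nonempty :=
    ⟨K, K.2, fun a ha b hb => hK.dist_le_mul a ha b hb⟩
  refine ⟨Real.sInf_nonneg fun x hx => hx.1, fun a ha b hb => ?_⟩
  rcases (dist_nonneg (x := a) (y := b)).eq_or_lt with h0 | h0
  · have := hK.dist_le_mul a ha b hb
    rw [← h0] at this ⊢
    simpa using this
  · rw [← div_le_iff₀ h0]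
    refine le_csInf hne fun l hl => ?_
    rw [div_le_iff₀ h0]
    exact hl.2 a ha b hb

/-- existence of a good regularity constant -/
theorem aux_kappa {X Y : Type*} [NormedAddCommGroup X] [NormedSpace ℝ X] [CompleteSpace X]
    [NormedAddCommGroup Y] [NormedSpace ℝ Y] [CompleteSpace Y]
    (f : X → Y) (x₀ : X) (c : ℝ) (hc : 0 < c) (r₀ : ℝ) (hr₀ : 0 < r₀)
    (hdiff : ∀ x ∈ ball x₀ r₀, DifferentiableAt ℝ f x) (L : ℝ) (hL0 : 0 ≤ L)
    (hL : ∀ x₁ ∈ ball x₀ r₀, ∀ x₂ ∈ ball x₀ r₀,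
      dist (fderiv ℝ f x₁) (fderiv ℝ f x₂) ≤ L * dist x₁ x₂)
    (hsurj : Function.Surjective (fderiv ℝ f x₀))
    (hreg : regBound f x₀ * ENNReal.ofReal L / 8 < ENNReal.ofReal c) :
    ∃ κ : ℝ, 0 ≤ κ ∧ κ * L / 8 < c ∧ ∃ δ > 0,
    ∀ x ∈ closedBall x₀ δ, ∀ y ∈ closedBall (f x₀) δ,
      Metric.infDist x {x' | f x' = y} ≤ κ * ‖y - f x‖ := by
  rcases hL0.eq_or_lt with h0 | h0
  · subst h0
    obtain ⟨C, hC0, hC⟩ := (fderiv ℝ f x₀).exists_preimage_norm_le hsurj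
    have hx0 : x₀ ∈ ball x₀ r₀ := mem_ball_self hr₀
    have haff : ∀ x ∈ ball x₀ r₀, f x = f x₀ + fderiv ℝ f x₀ (x - x₀) := by
      intro x hx
      have := aux_taylor (convex_ball x₀ r₀) hdiff hL (x := x₀) (h := x - x₀) hx0 (by simpa using hx)
      rw [zero_mul, zero_div, norm_le_zero_iff, add_sub_cancel] at this
      rw [sub_sub, sub_eq_zero] at this
      exact this
    set A := fderiv ℝ f x₀ with hA
    set δ := r₀ / (2 * (1 + C * (1 + ‖A‖))) with hδ
    have hden : 0 < 1 + C * (1 + ‖A‖) := by positivity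
    have hδ0 : 0 < δ := by positivity
    have hδe : δ * (1 + C * (1 + ‖A‖)) = r₀ / 2 := by rw [hδ]; field_simp
    refine ⟨C, hC0.le, by simpa using hc, δ, hδ0, fun x hx y hy => ?_⟩
    rw [mem_closedBall, dist_eq_norm] at hx hy
    have hδr : δ < r₀ := by
      have : 0 ≤ δ * (C * (1 + ‖A‖)) := by positivity
      nlinarith
    have hxb : x ∈ ball x₀ r₀ := by
      rw [mem_ball, dist_eq_norm]; linarith
    obtain ⟨u, hu, hun⟩ := hC (y - f x)
    have hfx := haff x hxb
    have hyx : ‖y - f x‖ ≤ δ * (1 + ‖A‖) := by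
      rw [hfx, show y - (f x₀ + A (x - x₀)) = (y - f x₀) - A (x - x₀) by abel]
      refine (norm_sub_le _ _).trans ?_
      have := A.le_opNorm (x - x₀)
      have := mul_le_mul_of_nonneg_left hx (norm_nonneg A)
      linarith
    have hxu : x + u ∈ ball x₀ r₀ := by
      rw [mem_ball, dist_eq_norm, show x + u - x₀ = (x - x₀) + u by abel]
      refine (norm_add_le _ _).trans_lt ?_
      have := mul_le_mul_of_nonneg_left hyx hC0.le
      linarith
    have hfu : f (x + u) = y := by
      rw [haff _ hxu, show x + u - x₀ = (x - x₀) + u by abel, map_add, ← add_assoc, ← hfx, hu]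
      abel
    refine (infDist_le_dist_of_mem (show x + u ∈ {x' | f x' = y} from hfu)).trans ?_
    rw [dist_eq_norm, show x - (x + u) = -u by abel, norm_neg]
    exact hun
  · have hlt : regBound f x₀ < ENNReal.ofReal (8 * c / L) := by
      by_contra hcon
      rw [not_lt] at hcon
      refine absurd hreg (not_lt.2 ?_)
      calc ENNReal.ofReal c = ENNReal.ofReal (8 * c / L) * ENNReal.ofReal L / 8 := by
            rw [← ENNReal.ofReal_mul (by positivity), show (8 : ℝ≥0∞) = ENNReal.ofReal 8 by simp,
              ← ENNReal.ofReal_div_of_pos (by norm_num)]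
            congr 1
            field_simp
        _ ≤ _ := by gcongr
    rw [regBound, sInf_lt_iff] at hlt
    obtain ⟨_, ⟨κ, ⟨hκ0, hκ⟩, rfl⟩, hlt⟩ := hlt
    refine ⟨κ, hκ0, ?_, hκ⟩
    have := (ENNReal.ofReal_lt_ofReal_iff (by positivity)).1 hlt
    rw [lt_div_iff₀ h0] at this
    linarith

/-- Extension of the Polyak convexity principle (Theorem 3.1 of the paper). -/
theorem polyak_convexity_principle_extension
    {X Y : Type*} [NormedAddCommGroup X] [NormedSpace ℝ X] [CompleteSpace X]
    [NormedAddCommGroup Y] [NormedSpace ℝ Y] [CompleteSpace Y]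
    (Ω : Set X) (hΩopen : IsOpen Ω) (hΩne : Ω.Nonempty)
    (f : X → Y) (x₀ : X) (hx₀ : x₀ ∈ Ω) (c : ℝ) (hc : 0 < c)
    (r₀ : ℝ) (hr₀ : 0 < r₀) (hballΩ : ball x₀ r₀ ⊆ Ω)
    -- (i) f ∈ C^{1,1}(int B(x₀, r₀))
    (hdiff : ∀ x ∈ ball x₀ r₀, DifferentiableAt ℝ f x)
    (hlip : ∃ K : ℝ≥0, LipschitzOnWith K (fderiv ℝ f) (ball x₀ r₀))
    -- (ii) Df(x₀) is onto
    (hsurj : Function.Surjective (fderiv ℝ f x₀))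
    -- (iii) reg(f, x₀) · lip(Df, int B(x₀, r₀)) / 8 < c
    (hreg : regBound f x₀ * ENNReal.ofReal (lipOn (fderiv ℝ f) (ball x₀ r₀)) / 8
      < ENNReal.ofReal c) :
    ∃ ρ : ℝ, 0 < ρ ∧ ρ < r₀ ∧ ∀ S : Set X, UniformlyConvexWith c S →
      S ⊆ closedBall x₀ ρ → IsClosed (f '' S) →
      ∃ c' : ℝ, 0 < c' ∧ UniformlyConvexWith c' (f '' S) := by
  obtain ⟨hL0, hL⟩ := aux_lipOn hlip
  obtain ⟨κ, hκ0, hκL, δ, hδ, hκ⟩ :=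
    aux_kappa f x₀ c hc r₀ hr₀ hdiff _ hL0 hL hsurj hreg
  set L := lipOn (fderiv ℝ f) (ball x₀ r₀) with hLdef
  have hx0 : x₀ ∈ ball x₀ r₀ := mem_ball_self hr₀
  have hconvB := convex_ball x₀ r₀
  -- local surjectivity
  obtain ⟨ζ, hζ, hpre⟩ : ∃ ζ > 0, ∀ y ∈ ball (f x₀) ζ, ∃ x, f x = y := by
    have hstrict : HasStrictFDerivAt f (fderiv ℝ f x₀) x₀ := by
      obtain ⟨K, hK⟩ := hlip
      refine hasStrictFDerivAt_of_hasFDerivAt_of_continuousAt ?_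
        (hK.continuousOn.continuousAt (ball_mem_nhds x₀ hr₀))
      filter_upwards [ball_mem_nhds x₀ hr₀] with y hy using (hdiff y hy).hasFDerivAt
    have hmap := hstrict.map_nhds_eq_of_surj (LinearMap.range_eq_top.2 hsurj)
    have : range f ∈ nhds (f x₀) := by
      rw [← hmap]; exact Filter.range_mem_map
    obtain ⟨ζ, hζ, h⟩ := Metric.mem_nhds_iff.1 this
    exact ⟨ζ, hζ, fun y hy => h hy⟩
  -- Lipschitz constant of f
  set M := ‖fderiv ℝ f x₀‖ + L * r₀ + 1 with hM
  have hM0 : 0 < M := by positivity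
  have hfl : ∀ x ∈ ball x₀ r₀, ∀ y ∈ ball x₀ r₀, ‖f y - f x‖ ≤ M * ‖y - x‖ := by
    intro x hx y hy
    refine hconvB.norm_image_sub_le_of_norm_fderiv_le hdiff (fun z hz => ?_) hx hy
    have h1 := hL z hz x₀ hx0
    have h2 := mul_le_mul_of_nonneg_left (mem_ball.1 hz).le hL0
    have h3 := norm_le_norm_add_norm_sub' (fderiv ℝ f z) (fderiv ℝ f x₀)
    rw [dist_eq_norm] at h1
    linarith
  obtain ⟨θ, hθ, hκθ⟩ : ∃ θ > 0, κ * (L / 8 + θ) < c := by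
    refine ⟨(c - κ * L / 8) / (2 * (κ + 1)), by
      have : 0 < c - κ * L / 8 := by linarith
      positivity, ?_⟩
    have h1 : κ * ((c - κ * L / 8) / (2 * (κ + 1))) < c - κ * L / 8 := by
      rw [mul_div_assoc', div_lt_iff₀ (by positivity)]
      nlinarith
    linarith
  set ρ := min (min (r₀ / 2) 1) (min δ (min δ (ζ / 2) / (M + 4 * θ))) with hρ
  have hMθ : 0 < M + 4 * θ := by positivity
  have hρ0 : 0 < ρ := by
    simp only [hρ, lt_min_iff]
    refine ⟨⟨by positivity, one_pos⟩, hδ, div_pos (lt_min hδ (by positivity)) hMθ⟩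
  have hρr : ρ < r₀ := by
    have : ρ ≤ r₀ / 2 := (min_le_left _ _).trans (min_le_left _ _)
    linarith
  have hρ1 : ρ ≤ 1 := (min_le_left _ _).trans (min_le_right _ _)
  have hρδ : ρ ≤ δ := (min_le_right _ _).trans (min_le_left _ _)
  have hρM : ρ * (M + 4 * θ) ≤ min δ (ζ / 2) := by
    rw [← le_div_iff₀ hMθ]
    exact (min_le_right _ _).trans (min_le_right _ _)
  refine ⟨ρ, hρ0, hρr, fun S hS hSρ hcl => ?_⟩
  have hSb : S ⊆ ball x₀ r₀ := hSρ.trans (closedBall_subset_ball hρr)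
  have hbd : Bornology.IsBounded S := isBounded_closedBall.subset hSρ
  -- key inclusion
  have key : ∀ x₁ ∈ S, ∀ x₂ ∈ S, x₁ ≠ x₂ →
      closedBall (midpoint ℝ (f x₁) (f x₂)) (θ * ‖x₁ - x₂‖ ^ 2) ⊆ f '' S := by
    intro x₁ h₁ x₂ h₂ hne y hy
    have hbs := aux_ball_subset hc hS hbd h₁ h₂ hne
    set m := midpoint ℝ x₁ x₂ with hm
    set e := ‖x₁ - x₂‖ with he
    have hepos : 0 < e := norm_pos_iff.2 (sub_ne_zero.2 hne)
    have hmS : m ∈ S := hS.2.2.1.midpoint_mem h₁ h₂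
    set h : X := (2⁻¹ : ℝ) • (x₁ - x₂) with hh
    have hhn : ‖h‖ = e / 2 := by
      rw [hh, norm_smul]; simp; ring
    have hx1 : m + h = x₁ := by
      simp only [hm, hh, midpoint_eq_smul_add, invOf_eq_inv]; module
    have hx2 : m + -h = x₂ := by
      simp only [hm, hh, midpoint_eq_smul_add, invOf_eq_inv]; module
    have t1 := aux_taylor hconvB hdiff hL (x := m) (h := h) (hSb hmS) (by rw [hx1]; exact hSb h₁)
    have t2 := aux_taylor hconvB hdiff hL (x := m) (h := -h) (hSb hmS) (by rw [hx2]; exact hSb h₂)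
    rw [hx1, hhn] at t1
    rw [hx2, norm_neg, hhn] at t2
    have hmid : ‖midpoint ℝ (f x₁) (f x₂) - f m‖ ≤ L / 8 * e ^ 2 := by
      have : midpoint ℝ (f x₁) (f x₂) - f m = (2⁻¹ : ℝ) •
          ((f x₁ - f m - fderiv ℝ f m h) + (f x₂ - f m - fderiv ℝ f m (-h))) := by
        rw [map_neg, midpoint_eq_smul_add, invOf_eq_inv]; module
      rw [this, norm_smul]
      have := norm_add_le (f x₁ - f m - fderiv ℝ f m h) (f x₂ - f m - fderiv ℝ f m (-h))
      simp only [norm_inv, Real.norm_ofNat]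
      linarith
    rw [mem_closedBall, dist_eq_norm] at hy
    have hye : ‖y - f m‖ ≤ (L / 8 + θ) * e ^ 2 := by
      have := norm_add_le (y - midpoint ℝ (f x₁) (f x₂)) (midpoint ℝ (f x₁) (f x₂) - f m)
      rw [sub_add_sub_cancel] at this
      linarith
    have hfx : ∀ x ∈ S, ‖f x - f x₀‖ ≤ M * ρ := fun x hx => by
      refine (hfl x₀ hx0 x (hSb hx)).trans ?_
      have := hSρ hx
      rw [mem_closedBall, dist_eq_norm] at this
      gcongr
    have he2 : e ≤ 2 * ρ := by
      have a1 := mem_closedBall.1 (hSρ h₁)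
      have a2 := mem_closedBall.1 (hSρ h₂)
      have := dist_triangle_right x₁ x₂ x₀
      rw [dist_eq_norm x₁ x₂] at this
      linarith
    have hyx0 : ‖y - f x₀‖ ≤ min δ (ζ / 2) := by
      refine le_trans ?_ hρM
      have e1 : y - f x₀ = (y - midpoint ℝ (f x₁) (f x₂)) +
          (2⁻¹ : ℝ) • ((f x₁ - f x₀) + (f x₂ - f x₀)) := by
        rw [midpoint_eq_smul_add, invOf_eq_inv]; module
      rw [e1]
      refine (norm_add_le _ _).trans ?_
      rw [norm_smul]
      have := norm_add_le (f x₁ - f x₀) (f x₂ - f x₀)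
      have := hfx x₁ h₁
      have := hfx x₂ h₂
      simp only [norm_inv, Real.norm_ofNat]
      have h4 : θ * e ^ 2 ≤ 4 * θ * ρ := by
        have : e ^ 2 ≤ 4 * ρ := by nlinarith
        nlinarith
      linarith
    have hne' : {x' | f x' = y}.Nonempty := by
      refine hpre y ?_
      rw [mem_ball, dist_eq_norm]
      have := hyx0.trans (min_le_right _ _)
      linarith
    have hinf := hκ m (closedBall_subset_closedBall hρδ (hSρ hmS)) y (by
      rw [mem_closedBall, dist_eq_norm]; exact hyx0.trans (min_le_left _ _))
    have hlt : infDist m {x' | f x' = y} < c * e ^ 2 := by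
      calc _ ≤ κ * ‖y - f m‖ := hinf
        _ ≤ κ * ((L / 8 + θ) * e ^ 2) := by gcongr
        _ = κ * (L / 8 + θ) * e ^ 2 := by ring
        _ < c * e ^ 2 := by gcongr
    obtain ⟨x, hx, hxd⟩ := (infDist_lt_iff hne').1 hlt
    exact ⟨x, hbs (by rw [mem_ball']; exact hxd), hx⟩
  have hconv : Convex ℝ (f '' S) := by
    refine aux_convex_of_mid hcl ?_
    rintro _ ⟨x₁, h₁, rfl⟩ _ ⟨x₂, h₂, rfl⟩
    rcases eq_or_ne x₁ x₂ with rfl | hne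
    · rw [midpoint_self]; exact mem_image_of_mem f h₁
    · exact key x₁ h₁ x₂ h₂ hne (mem_closedBall_self (by positivity))
  refine ⟨θ / M ^ 2, by positivity, hS.1.image f, hcl, hconv, fun ε hε hεd => ?_⟩
  refine le_csSup ?_ ⟨by positivity, ?_⟩
  · obtain ⟨y₁, h₁, y₂, h₂, hlt⟩ : ∃ y₁ ∈ f '' S, ∃ y₂ ∈ f '' S, ε < dist y₁ y₂ := by
      by_contra hcon
      push Not at hcon
      exact absurd (diam_le_of_forall_dist_le hε.le hcon) (not_le.2 hεd)
    rw [dist_eq_norm] at hlt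
    have hnp : 0 < ‖y₁ - y₂‖ := hε.trans hlt
    set y₃ := y₂ + (ε / ‖y₁ - y₂‖) • (y₁ - y₂) with hy3
    have h₃ : y₃ ∈ f '' S := hconv.add_smul_sub_mem h₂ h₁
      ⟨by positivity, by rw [div_le_one hnp]; exact hlt.le⟩
    have hd3 : ‖y₃ - y₂‖ = ε := by
      rw [hy3, add_sub_cancel_left, norm_smul, Real.norm_of_nonneg (by positivity)]
      field_simp
    refine ⟨M * ρ + ‖midpoint ℝ y₃ y₂ - f x₀‖, ?_⟩
    rintro d ⟨hd0, hd⟩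
    have hin := hd y₃ h₃ y₂ h₂ hd3
    have hnorm : ‖(d / ε) • (y₃ - y₂)‖ = d := by
      rw [norm_smul, hd3, Real.norm_of_nonneg (by positivity)]; field_simp
    obtain ⟨x, hx, hxe⟩ := hin (show midpoint ℝ y₃ y₂ + (d / ε) • (y₃ - y₂) ∈ _ by
      rw [mem_closedBall, dist_eq_norm, add_sub_cancel_left, hnorm])
    have hfx : ‖f x - f x₀‖ ≤ M * ρ := by
      refine (hfl x₀ hx0 x (hSb hx)).trans ?_
      have := hSρ hx
      rw [mem_closedBall, dist_eq_norm] at this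
      gcongr
    have e1 : (d / ε) • (y₃ - y₂) = (f x - f x₀) - (midpoint ℝ y₃ y₂ - f x₀) := by
      rw [hxe]; abel
    rw [← hnorm, e1]
    refine (norm_sub_le _ _).trans ?_
    linarith
  · rintro _ ⟨x₁, h₁, rfl⟩ _ ⟨x₂, h₂, rfl⟩ he
    have hne : x₁ ≠ x₂ := by
      rintro rfl
      rw [sub_self, norm_zero] at he
      exact hε.ne he
    refine (closedBall_subset_closedBall ?_).trans (key x₁ h₁ x₂ h₂ hne)
    have := hfl x₂ (hSb h₂) x₁ (hSb h₁)
    rw [he] at this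
    rw [div_mul_eq_mul_div, div_le_iff₀ (by positivity), mul_assoc, ← mul_pow, mul_comm ‖x₁ - x₂‖]
    gcongr
end

section
/- Let X, Y be real Banach spaces such that X admits a modulus of convexity of power type 2, i.e. there exists γ > 0 with δ_X(ε) ≥ γε² for all ε ∈ (0, 2]. Let Ω ⊆ X be open nonempty, f : Ω → Y and x₀ ∈ Ω. Assume f is differentiable with Lipschitz continuous derivative on int B(x₀, r₀) ⊆ Ω for some r₀ > 0, and Df(x₀) is surjective. Then there exists ρ ∈ (0, r₀) such that for every r-convex set S ⊆ B(x₀, ρ) with r ∈ (0, ρ) and f(S) closed, there exists c' > 0 with f(S) ∈ U_{c'}(Y); in particular f(S) is uniformly convex. -/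
open Metric Set
open scoped NNReal ENNReal

theorem aux_convex {Y : Type*} [NormedAddCommGroup Y] [NormedSpace ℝ Y] {S : Set Y}
    (hc : IsClosed S) (hm : ∀ x ∈ S, ∀ y ∈ S, midpoint ℝ x y ∈ S) : Convex ℝ S := by
  rw [convex_iff_segment_subset]
  intro x hx y hy z hz
  rw [segment_eq_image_lineMap] at hz
  obtain ⟨t, ht, rfl⟩ := hz
  set g : ℝ → Y := fun s => AffineMap.lineMap x y s with hg
  have hgc : Continuous g := AffineMap.lineMap_continuous
  set T : Set ℝ := Icc 0 1 ∩ g ⁻¹' S with hT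
  have hTc : IsCompact T := isCompact_Icc.inter_right (hc.preimage hgc)
  have hA : IsCompact (T ∩ Iic t) := hTc.inter_right isClosed_Iic
  have hB : IsCompact (T ∩ Ici t) := hTc.inter_right isClosed_Ici
  have h0 : (0:ℝ) ∈ T ∩ Iic t := ⟨⟨by simp, by simpa [hg] using hx⟩, ht.1⟩
  have h1 : (1:ℝ) ∈ T ∩ Ici t := ⟨⟨by simp, by simpa [hg] using hy⟩, ht.2⟩
  have ha := hA.sSup_mem ⟨0, h0⟩
  have hb := hB.sInf_mem ⟨1, h1⟩
  have hau := fun s hs => le_csSup (a := s) hA.bddAbove hs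
  have hbu := fun s hs => csInf_le (a := s) hB.bddBelow hs
  set a := sSup (T ∩ Iic t)
  set b := sInf (T ∩ Ici t)
  have hat : a ≤ t := ha.2
  have hbt : t ≤ b := hb.2
  have hmid : midpoint ℝ a b ∈ T := by
    refine ⟨(convex_Icc (0:ℝ) 1).midpoint_mem ha.1.1 hb.1.1, ?_⟩
    have : g (midpoint ℝ a b) = midpoint ℝ (g a) (g b) :=
      AffineMap.map_midpoint (AffineMap.lineMap x y) a b
    change g _ ∈ S
    rw [this]
    exact hm _ ha.1.2 _ hb.1.2
  have hme : midpoint ℝ a b = (a + b) / 2 := by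
    rw [midpoint_eq_smul_add, smul_eq_mul, invOf_eq_inv]; ring
  have hab : a = b := by
    rcases le_total (midpoint ℝ a b) t with h | h
    · have := hau _ ⟨hmid, h⟩
      linarith
    · have := hbu _ ⟨hmid, h⟩
      linarith
  have : t = a := by linarith
  change g t ∈ S
  rw [this]
  exact ha.1.2

theorem aux_finish {Y : Type*} [NormedAddCommGroup Y] [NormedSpace ℝ Y] {S : Set Y} {c : ℝ}
    (hc : 0 < c) (hne : S.Nonempty) (hcl : IsClosed S) (hbd : Bornology.IsBounded S)
    (h : ∀ x ∈ S, ∀ y ∈ S, closedBall (midpoint ℝ x y) (c * ‖x - y‖ ^ 2) ⊆ S) :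
    UniformlyConvexWith c S := by
  have hconv : Convex ℝ S := aux_convex hcl fun x hx y hy =>
    h x hx y hy (mem_closedBall_self (by positivity))
  refine ⟨hne, hcl, hconv, fun ε hε hd => ?_⟩
  -- a pair at distance exactly ε
  obtain ⟨x, hx, y, hy, hxy⟩ : ∃ x ∈ S, ∃ y ∈ S, ε < ‖x - y‖ := by
    by_contra! hcon
    have := Metric.diam_le_of_forall_dist_le hε.le (s := S)
      (fun x hx y hy => by rw [dist_eq_norm]; exact hcon x hx y hy)
    linarith
  have hp : 0 < ‖x - y‖ := hε.trans hxy
  set z := AffineMap.lineMap x y (ε / ‖x - y‖) with hz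
  have hzS : z ∈ S := hconv.lineMap_mem hx hy ⟨by positivity, by rw [div_le_one hp]; exact hxy.le⟩
  have hxz : ‖x - z‖ = ε := by
    rw [← dist_eq_norm, hz, dist_left_lineMap, dist_eq_norm, Real.norm_of_nonneg (by positivity)]
    field_simp
  have hxz' : x - z ≠ 0 := by rw [← norm_pos_iff, hxz]; exact hε
  refine le_csSup ?_ ⟨by positivity, ?_⟩
  · refine ⟨Metric.diam S, ?_⟩
    rintro δ ⟨hδ, H⟩
    have hb := H x hx z hzS hxz
    set m := midpoint ℝ x z
    have h1 : m + (δ / ε) • (x - z) ∈ S := hb (by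
      rw [mem_closedBall, dist_eq_norm, add_sub_cancel_left, norm_smul, hxz,
        Real.norm_of_nonneg (by positivity)]
      field_simp; exact le_rfl)
    have h2 := Metric.dist_le_diam_of_mem hbd h1 (hb (mem_closedBall_self hδ))
    rw [dist_eq_norm, add_sub_cancel_left, norm_smul, hxz,
        Real.norm_of_nonneg (by positivity)] at h2
    field_simp at h2
    exact h2
  · intro x₁ h₁ x₂ h₂ h12
    have := h x₁ h₁ x₂ h₂
    rwa [h12] at this

theorem aux_rconvex {X : Type*} [NormedAddCommGroup X] [NormedSpace ℝ X] {γ : ℝ}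
    (hγ : ∀ ε : ℝ, 0 < ε → ε ≤ 2 → γ * ε ^ 2 ≤ spaceModulus X ε)
    {r : ℝ} (hr : 0 < r) {S : Set X} (hS : RConvex r S) :
    ∀ x ∈ S, ∀ y ∈ S, closedBall (midpoint ℝ x y) (γ / r * ‖x - y‖ ^ 2) ⊆ S := by
  obtain ⟨-, M, -, rfl⟩ := hS
  intro x hx y hy z hz
  rcases eq_or_ne x y with rfl | hxy
  · simp at hz
    rw [hz]; exact hx
  simp only [mem_iInter] at hx hy ⊢
  intro a ha
  have hxa := hx a ha
  have hya := hy a ha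
  rw [mem_closedBall, dist_eq_norm] at hxa hya hz ⊢
  have hp : 0 < ‖x - y‖ := norm_pos_iff.2 (sub_ne_zero.2 hxy)
  have key : ∀ w : X, ‖w - a‖ ≤ r → r⁻¹ • (w - a) ∈ closedBall (0:X) 1 := by
    intro w hw
    rw [mem_closedBall_zero_iff, norm_smul, norm_inv, Real.norm_of_nonneg hr.le,
      inv_mul_le_iff₀ hr]
    linarith
  have hd : ‖r⁻¹ • (x - a) - r⁻¹ • (y - a)‖ = ‖x - y‖ / r := by
    rw [← smul_sub, sub_sub_sub_cancel_right, norm_smul, norm_inv, Real.norm_of_nonneg hr.le]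
    field_simp
  have hle : ‖x - y‖ / r ≤ 2 := by
    rw [← hd]
    have h1 := key x hxa
    have h2 := key y hya
    rw [mem_closedBall_zero_iff] at h1 h2
    linarith [norm_sub_le (r⁻¹ • (x - a)) (r⁻¹ • (y - a))]
  have h1 := hγ _ (div_pos hp hr) hle
  have h2 : spaceModulus X (‖x - y‖ / r) ≤ 1 - ‖midpoint ℝ (r⁻¹ • (x - a)) (r⁻¹ • (y - a))‖ := by
    refine csInf_le ?_ ⟨_, key x hxa, _, key y hya, hd, rfl⟩
    refine ⟨0, ?_⟩
    rintro d ⟨u, hu, v, hv, -, rfl⟩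
    have := (convex_closedBall (0:X) 1).midpoint_mem hu hv
    rw [mem_closedBall_zero_iff] at this
    linarith
  have h3 : midpoint ℝ (r⁻¹ • (x - a)) (r⁻¹ • (y - a)) = r⁻¹ • (midpoint ℝ x y - a) := by
    rw [midpoint_eq_smul_add, midpoint_eq_smul_add, invOf_eq_inv]
    module
  rw [h3, norm_smul, norm_inv, Real.norm_of_nonneg hr.le] at h2
  have h4 : r * (r⁻¹ * ‖midpoint ℝ x y - a‖) ≤ r * (1 - γ * (‖x - y‖ / r) ^ 2) := by
    gcongr; linarith
  rw [mul_inv_cancel_left₀ hr.ne'] at h4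
  have h5 : r * (1 - γ * (‖x - y‖ / r) ^ 2) = r - γ / r * ‖x - y‖ ^ 2 := by
    field_simp
  have := norm_add_le (z - midpoint ℝ x y) (midpoint ℝ x y - a)
  rw [sub_add_sub_cancel] at this
  linarith

/-- Corollary 3.2 of the paper: in a space whose modulus of convexity is of power
type 2, images of small strongly convex sets under a `C^{1,1}` mapping with
surjective derivative are uniformly convex. -/
theorem polyak_convexity_principle_strongly_convex
    {X Y : Type*} [NormedAddCommGroup X] [NormedSpace ℝ X] [CompleteSpace X]
    [NormedAddCommGroup Y] [NormedSpace ℝ Y] [CompleteSpace Y]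
    -- (i) X admits a modulus of convexity of power type 2
    (hX : ∃ γ : ℝ, 0 < γ ∧ ∀ ε : ℝ, 0 < ε → ε ≤ 2 → γ * ε ^ 2 ≤ spaceModulus X ε)
    (Ω : Set X) (hΩopen : IsOpen Ω) (hΩne : Ω.Nonempty)
    (f : X → Y) (x₀ : X) (hx₀ : x₀ ∈ Ω)
    (r₀ : ℝ) (hr₀ : 0 < r₀) (hballΩ : ball x₀ r₀ ⊆ Ω)
    -- (ii) f ∈ C^{1,1}(int B(x₀, r₀))
    (hdiff : ∀ x ∈ ball x₀ r₀, DifferentiableAt ℝ f x)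
    (hlip : ∃ K : ℝ≥0, LipschitzOnWith K (fderiv ℝ f) (ball x₀ r₀))
    -- (iii) Df(x₀) is onto
    (hsurj : Function.Surjective (fderiv ℝ f x₀)) :
    ∃ ρ : ℝ, 0 < ρ ∧ ρ < r₀ ∧ ∀ r : ℝ, 0 < r → r < ρ → ∀ S : Set X, RConvex r S →
      S ⊆ closedBall x₀ ρ → IsClosed (f '' S) →
      ∃ c' : ℝ, 0 < c' ∧ UniformlyConvexWith c' (f '' S) := by
  obtain ⟨γ, hγ0, hγ⟩ := hX
  obtain ⟨K, hK⟩ := hlip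
  set A := fderiv ℝ f x₀ with hA
  have hrange : A.range = ⊤ := LinearMap.range_eq_top.2 hsurj
  set R := A.nonlinearRightInverseOfSurjective hrange
  have hRpos : 0 < R.nnnorm := A.nonlinearRightInverseOfSurjective_nnnorm_pos hrange
  set σ : ℝ≥0 := R.nnnorm⁻¹ / 2 with hσ
  have hσ0' : 0 < σ := by positivity
  have hσ0 : (0:ℝ) < σ := hσ0'
  have hσe : ((R.nnnorm : ℝ)⁻¹ - σ) = σ := by rw [hσ]; push_cast; ring
  have hK0 : (0:ℝ) ≤ K := K.2
  set ρ : ℝ := min (r₀ / 2) (min (σ / (K + 1)) (γ * σ / (2 * (K + 1)))) with hρ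
  have hρ0 : 0 < ρ := by positivity
  have hρ1 : ρ ≤ r₀ / 2 := min_le_left _ _
  have hρ2 : ρ ≤ σ / (K + 1) := (min_le_right _ _).trans (min_le_left _ _)
  have hρ3 : ρ ≤ γ * σ / (2 * (K + 1)) := (min_le_right _ _).trans (min_le_right _ _)
  rw [le_div_iff₀ (by positivity)] at hρ2 hρ3
  have hsub : closedBall x₀ ρ ⊆ ball x₀ r₀ := closedBall_subset_ball (by linarith)
  have happ : ApproximatesLinearOn f A (closedBall x₀ ρ) σ := by
    intro x hx y hy
    refine (convex_closedBall x₀ ρ).norm_image_sub_le_of_norm_fderiv_le'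
      (fun z hz => hdiff z (hsub hz)) (fun z hz => ?_) hy hx
    have h1 := hK.dist_le_mul z (hsub hz) x₀ (mem_ball_self hr₀)
    rw [dist_eq_norm] at h1
    have h2 : (K:ℝ) * dist z x₀ ≤ K * ρ := by gcongr; exact hz
    linarith
  refine ⟨ρ, hρ0, by linarith, fun r hr hrρ S hS hSsub hcl => ?_⟩
  set N : ℝ := ‖A‖ + σ with hN
  have hN0 : 0 < N := by positivity
  have hLip : ∀ x ∈ S, ∀ y ∈ S, ‖f x - f y‖ ≤ N * ‖x - y‖ := by
    intro x hx y hy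
    have h1 := happ x (hSsub hx) y (hSsub hy)
    have h2 := A.le_opNorm (x - y)
    have h3 := norm_add_le (f x - f y - A (x - y)) (A (x - y))
    rw [sub_add_cancel] at h3
    rw [hN, add_mul]; linarith
  refine ⟨1 / N ^ 2, by positivity, aux_finish (by positivity) (hS.1.image f) hcl ?_ ?_⟩
  · refine Metric.isBounded_iff.2 ⟨N * (2 * ρ), ?_⟩
    rintro _ ⟨x, hx, rfl⟩ _ ⟨y, hy, rfl⟩
    rw [dist_eq_norm]
    refine (hLip x hx y hy).trans ?_
    gcongr
    rw [← dist_eq_norm]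
    have h1 := mem_closedBall.1 (hSsub hx)
    have h2 := mem_closedBall.1 (hSsub hy)
    linarith [dist_triangle_right x y x₀]
  rintro _ ⟨x, hx, rfl⟩ _ ⟨y, hy, rfl⟩ w hw
  have hball := aux_rconvex hγ hr hS x hx y hy
  set d := ‖x - y‖ with hd
  have hd0 : 0 ≤ d := norm_nonneg _
  set m := midpoint ℝ x y with hm
  have ht0 : 0 ≤ γ / r * d ^ 2 := by positivity
  have hmS : m ∈ S := hball (mem_closedBall_self ht0)
  have hsurjOn := happ.surjOn_closedBall_of_nonlinearRightInverse R ht0 (hball.trans hSsub)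
  rw [hσe] at hsurjOn
  -- second order estimate
  have hseg : segment ℝ x y ⊆ ball x₀ r₀ :=
    ((convex_closedBall x₀ ρ).segment_subset (hSsub hx) (hSsub hy)).trans hsub
  have hmseg : m ∈ segment ℝ x y := midpoint_mem_segment x y
  have hest : ∀ u ∈ segment ℝ x y, ‖f u - f m - fderiv ℝ f m (u - m)‖ ≤ K * d * ‖u - m‖ := by
    intro u hu
    refine (convex_segment x y).norm_image_sub_le_of_norm_fderiv_le'
      (fun z hz => hdiff z (hseg hz)) (fun z hz => ?_) hmseg hu
    have h1 := hK.dist_le_mul z (hseg hz) m (hseg hmseg)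
    rw [dist_eq_norm] at h1
    have h2 : dist z m ≤ d := by
      have hdi : segment ℝ x y ⊆ closedBall m d := by
        refine (convex_closedBall m d).segment_subset ?_ ?_
        · rw [mem_closedBall, hm, dist_left_midpoint, dist_eq_norm, ← hd]
          norm_num; linarith
        · rw [mem_closedBall, hm, dist_right_midpoint, dist_eq_norm, ← hd]
          norm_num; linarith
      exact hdi hz
    exact h1.trans (by gcongr)
  have hxm : ‖x - m‖ = d / 2 := by
    rw [← dist_eq_norm, hm, dist_left_midpoint, dist_eq_norm, ← hd]; norm_num; ring
  have hym : ‖y - m‖ = d / 2 := by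
    rw [← dist_eq_norm, hm, dist_right_midpoint, dist_eq_norm, ← hd]; norm_num; ring
  have e1 := hest x (left_mem_segment ℝ x y)
  have e2 := hest y (right_mem_segment ℝ x y)
  rw [hxm] at e1
  rw [hym] at e2
  have hsum : (x - m) + (y - m) = 0 := by
    rw [hm, midpoint_eq_smul_add, invOf_eq_inv]; module
  have e3 : midpoint ℝ (f x) (f y) - f m = (2⁻¹:ℝ) • ((f x - f m - fderiv ℝ f m (x - m))
      + (f y - f m - fderiv ℝ f m (y - m))) := by
    have : fderiv ℝ f m (y - m) = - fderiv ℝ f m (x - m) := by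
      rw [← map_neg]; congr 1; exact (neg_eq_of_add_eq_zero_right hsum).symm
    rw [this, midpoint_eq_smul_add, invOf_eq_inv]; module
  have e4 : ‖midpoint ℝ (f x) (f y) - f m‖ ≤ K * d ^ 2 := by
    rw [e3, norm_smul, Real.norm_of_nonneg (by norm_num)]
    have := norm_add_le (f x - f m - fderiv ℝ f m (x - m)) (f y - f m - fderiv ℝ f m (y - m))
    nlinarith [mul_nonneg hK0 (sq_nonneg d)]
  have e5 : 1 / N ^ 2 * ‖f x - f y‖ ^ 2 ≤ d ^ 2 := by
    rw [one_div, inv_mul_le_iff₀ (by positivity), ← mul_pow]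
    gcongr
    exact hLip x hx y hy
  have e6 : (2 * (K + 1)) * d ^ 2 ≤ σ * (γ / r * d ^ 2) := by
    rw [← mul_assoc]
    refine mul_le_mul_of_nonneg_right ?_ (sq_nonneg d)
    rw [← mul_div_assoc, le_div_iff₀ hr]
    have : (2 * ((K:ℝ) + 1)) * r ≤ (2 * (K + 1)) * ρ := by gcongr
    linarith
  have hw' : w ∈ closedBall (f m) (σ * (γ / r * d ^ 2)) := by
    rw [mem_closedBall, dist_eq_norm] at hw ⊢
    have := norm_add_le (w - midpoint ℝ (f x) (f y)) (midpoint ℝ (f x) (f y) - f m)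
    rw [sub_add_sub_cancel] at this
    nlinarith [mul_nonneg hK0 (sq_nonneg d), sq_nonneg d]
  obtain ⟨u, hu, rfl⟩ := hsurjOn hw'
  exact ⟨u, hball hu, rfl⟩
end

section
/- Let X be a reflexive real Banach space, Y a real Banach space, Ω ⊆ X open nonempty, f : Ω → Y and x₀ ∈ Ω. Assume: (i) f is continuous on B(x₀, r₀) ⊆ Ω for some r₀ > 0; (ii) for every y ∈ B(f(x₀), r₀), the function x ↦ dist(x, f⁻¹(y)) is lower semicontinuous with respect to the weak topology of X; (iii) f is metrically regular around x₀. Then there exists ρ ∈ (0, r₀) such that for every closed convex set S ⊆ B(x₀, ρ), the image f(S) is closed in Y. -/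
open Metric Set
open scoped NNReal ENNReal

theorem weakCompact_of_closed_convex {X : Type*} [NormedAddCommGroup X] [NormedSpace ℝ X]
    (hrefl : Function.Surjective (NormedSpace.inclusionInDoubleDual ℝ X)) {S : Set X}
    (hSc : IsClosed S) (hSconv : Convex ℝ S) (hb : Bornology.IsBounded S) :
    IsCompact (toWeakSpace ℝ X '' S) := by
  have h := NormedSpace.isCompact_closure_of_isBounded ℝ X (toWeakSpace ℝ X '' S)
    (by
      rw [Set.preimage_image_eq _ (toWeakSpace ℝ X).injective]
      exact hb)
    (by
      intro φ _
      obtain ⟨x, hx⟩ := hrefl (WeakDual.toStrongDual φ)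
      refine ⟨toWeakSpace ℝ X x, ?_⟩
      exact DFunLike.ext _ _ fun g =>
        congrArg (fun ψ : StrongDual ℝ (StrongDual ℝ X) => ψ g) hx)
  rwa [← hSconv.toWeakSpace_closure ℝ, hSc.closure_eq] at h

set_option maxHeartbeats 1000000 in
/-- Proposition 3.4 of the paper: under metric regularity and weak lower
semicontinuity of the distance functions `x ↦ dist(x, f⁻¹(y))`, images of closed
convex sets close to `x₀` under `f` are closed, provided `X` is reflexive. -/
theorem image_of_closed_convex_is_closed
    {X Y : Type*} [NormedAddCommGroup X] [NormedSpace ℝ X] [CompleteSpace X]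
    [NormedAddCommGroup Y] [NormedSpace ℝ Y] [CompleteSpace Y]
    -- (iii) X is reflexive
    (hrefl : Function.Surjective (NormedSpace.inclusionInDoubleDual ℝ X))
    (Ω : Set X) (hΩopen : IsOpen Ω) (hΩne : Ω.Nonempty)
    (f : X → Y) (x₀ : X) (hx₀ : x₀ ∈ Ω)
    (r₀ : ℝ) (hr₀ : 0 < r₀) (hballΩ : closedBall x₀ r₀ ⊆ Ω)
    -- (i) f is continuous on B(x₀, r₀)
    (hcont : ContinuousOn f (closedBall x₀ r₀))
    -- (ii) for every y ∈ B(f(x₀), r₀), x ↦ dist(x, f⁻¹(y)) is weakly l.s.c.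
    (hwlsc : ∀ y ∈ closedBall (f x₀) r₀,
      LowerSemicontinuous (fun x : WeakSpace ℝ X =>
        Metric.infDist (show X from x) {x' : X | f x' = y}))
    -- (iv) f is metrically regular around x₀
    (hmr : ∃ δ > (0 : ℝ), ∃ κ : ℝ, 0 ≤ κ ∧
      ∀ x ∈ closedBall x₀ δ, ∀ y ∈ closedBall (f x₀) δ,
        Metric.infDist x {x' : X | f x' = y} ≤ κ * ‖y - f x‖) :
    ∃ ρ : ℝ, 0 < ρ ∧ ρ < r₀ ∧ ∀ S : Set X, IsClosed S → Convex ℝ S →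
      S ⊆ closedBall x₀ ρ → IsClosed (f '' S) := by
  obtain ⟨δ, hδ, κ, hκ, hreg⟩ := hmr
  have hx₀nb : closedBall x₀ r₀ ∈ nhds x₀ := closedBall_mem_nhds _ hr₀
  have hfx₀ : ContinuousAt f x₀ := hcont.continuousAt hx₀nb
  have hpre : f ⁻¹' closedBall (f x₀) (min δ r₀) ∈ nhds x₀ :=
    hfx₀ (closedBall_mem_nhds _ (lt_min hδ hr₀))
  obtain ⟨ε, hε, hεsub⟩ := Metric.nhds_basis_closedBall.mem_iff.1 hpre
  refine ⟨min ε (min δ (r₀ / 2)), by positivity, ?_, ?_⟩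
  · exact lt_of_le_of_lt ((min_le_right _ _).trans (min_le_right _ _)) (by linarith)
  intro S hSc hSconv hSsub
  have hS1 : ∀ s ∈ S, s ∈ closedBall x₀ δ := fun s hs =>
    closedBall_subset_closedBall ((min_le_right _ _).trans (min_le_left _ _)) (hSsub hs)
  have hS2 : ∀ s ∈ S, f s ∈ closedBall (f x₀) (min δ r₀) := fun s hs =>
    hεsub (closedBall_subset_closedBall (min_le_left _ _) (hSsub hs))
  have hS3 : ∀ s ∈ S, s ∈ ball x₀ r₀ := fun s hs => by
    have h1 := closedBall_subset_closedBall ((min_le_right _ _).trans (min_le_right _ _)) (hSsub hs)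
    rw [mem_closedBall] at h1
    rw [mem_ball]
    linarith
  -- weak compactness of S
  have hSwc : IsCompact (toWeakSpace ℝ X '' S) := by
    exact weakCompact_of_closed_convex hrefl hSc hSconv (isBounded_closedBall.subset hSsub)
  refine isClosed_of_closure_subset fun y hy => ?_
  have hne : (nhdsWithin y (f '' S)).NeBot := mem_closure_iff_nhdsWithin_neBot.1 hy
  have hG : (Filter.comap f (nhdsWithin y (f '' S)) ⊓ Filter.principal S).NeBot :=
    Filter.comap_inf_principal_neBot_of_image_mem hne self_mem_nhdsWithin
  have hGS : ∀ᶠ s in (Filter.comap f (nhdsWithin y (f '' S)) ⊓ Filter.principal S), s ∈ S := Filter.mem_inf_of_right (Filter.mem_principal_self S)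
  have hGf : Filter.Tendsto f (Filter.comap f (nhdsWithin y (f '' S)) ⊓ Filter.principal S) (nhds y) :=
    (Filter.tendsto_comap.mono_left inf_le_left).mono_right nhdsWithin_le_nhds
  generalize Filter.comap f (nhdsWithin y (f '' S)) ⊓ Filter.principal S = G at hG hGS hGf
  obtain ⟨U, hUG⟩ : ∃ U : Ultrafilter X, (U : Filter X) ≤ G := Ultrafilter.exists_le G
  obtain ⟨_, ⟨x, hxS, rfl⟩, hUx⟩ := isCompact_iff_ultrafilter_le_nhds.1 hSwc
    (U.map (toWeakSpace ℝ X)) (by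
      rw [Filter.le_principal_iff]
      have h : ∀ᶠ s in (U : Filter X), s ∈ S := hUG hGS
      exact h.mono fun s hs => Set.mem_image_of_mem _ hs)
  have hUx' : Filter.Tendsto (toWeakSpace ℝ X) (U : Filter X) (nhds (toWeakSpace ℝ X x)) := hUx
  have hUf : Filter.Tendsto f U (nhds y) := hGf.mono_left hUG
  have hUS : ∀ᶠ s in (U : Filter X), s ∈ S := hUG hGS
  -- key estimate
  have key : ∀ s ∈ S, Metric.infDist x {x' | f x' = f s} ≤ κ * ‖f s - y‖ := by
    intro s hs
    have hlim : Filter.Tendsto (fun t => κ * ‖f s - f t‖) U (nhds (κ * ‖f s - y‖)) :=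
      ((tendsto_const_nhds.sub hUf).norm).const_mul κ
    refine le_of_forall_lt fun c hc => ?_
    obtain ⟨c', hcc', hc'⟩ := exists_between hc
    have hl := hwlsc (f s) (closedBall_subset_closedBall (min_le_right _ _) (hS2 s hs))
      (toWeakSpace ℝ X x) c' hc'
    have hl' := hUx'.eventually hl
    refine lt_of_lt_of_le hcc' (ge_of_tendsto hlim ?_)
    filter_upwards [hl', hUS] with t ht htS
    exact (le_of_lt ht).trans (hreg t (hS1 t htS) (f s)
      (closedBall_subset_closedBall (min_le_left _ _) (hS2 s hs)))
  refine ⟨x, hxS, ?_⟩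
  have hfx : ContinuousAt f x := hcont.continuousAt (closedBall_mem_nhds_of_mem (hS3 x hxS))
  refine eq_of_forall_dist_le fun η hη => ?_
  obtain ⟨r, hr, hball⟩ := Metric.continuousAt_iff.1 hfx (η / 2) (by positivity)
  have hlim0 : Filter.Tendsto (fun t => κ * ‖f t - y‖) U (nhds 0) := by
    have := ((hUf.sub (tendsto_const_nhds (x := y))).norm).const_mul κ
    simpa using this
  have e1 := hlim0.eventually (gt_mem_nhds hr)
  have e2 := hUf.eventually (Metric.ball_mem_nhds y (half_pos hη))
  obtain ⟨s, hs1, hs2, hsS⟩ := (e1.and (e2.and hUS)).exists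
  have hnes : ({x' : X | f x' = f s}).Nonempty := ⟨s, rfl⟩
  obtain ⟨z, hz, hxz⟩ := (Metric.infDist_lt_iff hnes).1 ((key s hsS).trans_lt hs1)
  have hz' : f z = f s := hz
  have h3 := hball (x := z) (by rwa [dist_comm])
  rw [hz'] at h3
  have h4 : dist (f s) y < η / 2 := hs2
  have := dist_triangle_left (f x) y (f s)
  linarith
end

section
/- Let X, Y be real Banach spaces, φ : X → ℝ, g : X → Y, S ⊆ X and C ⊆ Y nonempty closed convex sets, and consider the problem (P): minimize φ(x) over x ∈ S subject to g(x) ∈ C, with feasible region R = S ∩ g⁻¹(C). Let x₀ ∈ R and define F_{x₀} : X → ℝ × Y by F_{x₀}(x) = (φ(x) − φ(x₀), g(x)). If F_{x₀} is open at a linear rate around x₀ and x₀ ∈ int S, then x₀ is not a local solution to (P): for every r > 0 there exists x ∈ S ∩ g⁻¹(C) with ‖x − x₀‖ ≤ r and φ(x) < φ(x₀). -/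
open Metric Set
open scoped NNReal ENNReal

/-- Lemma 4.2 of the paper: if the image-space mapping `F_{x₀}` associated with
problem (P) is open at a linear rate around `x₀ ∈ R` and `x₀ ∈ int S`,
then `x₀` is not a local solution to (P). -/
theorem not_local_solution_of_openAtLinearRate
    {X Y : Type*} [NormedAddCommGroup X] [NormedSpace ℝ X] [CompleteSpace X]
    [NormedAddCommGroup Y] [NormedSpace ℝ Y] [CompleteSpace Y]
    (φ : X → ℝ) (g : X → Y)
    (S : Set X) (hSne : S.Nonempty) (hScl : IsClosed S) (hSconv : Convex ℝ S)
    (C : Set Y) (hCne : C.Nonempty) (hCcl : IsClosed C) (hCconv : Convex ℝ C)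
    (x₀ : X) (hx₀S : x₀ ∈ S) (hx₀C : g x₀ ∈ C)
    (F : X → ℝ × Y) (hF : F = fun x => (φ x - φ x₀, g x))
    (hopen : OpenAtLinearRate F x₀) (hx₀int : x₀ ∈ interior S) :
    ∀ r : ℝ, 0 < r → ∃ x : X, x ∈ S ∧ g x ∈ C ∧ ‖x - x₀‖ ≤ r ∧ φ x < φ x₀ := by
  intro r hr
  obtain ⟨δ, hδ, ζ, hζ, σ, hσ, h⟩ := hopen
  obtain ⟨ε, hε, hεS⟩ := Metric.mem_nhds_iff.1 (mem_interior_iff_mem_nhds.1 hx₀int)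
  obtain ⟨ρ, hρ, hρm⟩ : ∃ ρ : ℝ, 0 < ρ ∧ ρ ≤ δ ∧ ρ ≤ r ∧ ρ < ε := by
    refine ⟨min δ (min r (ε / 2)), by positivity, min_le_left _ _,
      (min_le_right _ _).trans (min_le_left _ _), ?_⟩
    have : min δ (min r (ε / 2)) ≤ ε / 2 := (min_le_right _ _).trans (min_le_right _ _)
    linarith
  obtain ⟨h1, h2, h3⟩ := hρm
  obtain ⟨t, ht, ht1, ht2⟩ : ∃ t : ℝ, 0 < t ∧ t ≤ σ * ρ ∧ t ≤ ζ :=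
    ⟨min (σ * ρ) ζ, by positivity, min_le_left _ _, min_le_right _ _⟩
  have hd : dist ((-t, g x₀) : ℝ × Y) (F x₀) = t := by
    subst hF
    simp [Prod.dist_eq, abs_of_pos ht, ht.le]
  have hm : ((-t, g x₀) : ℝ × Y) ∈ closedBall (F x₀) (σ * ρ) ∩ closedBall (F x₀) ζ :=
    ⟨mem_closedBall.2 (hd.trans_le ht1), mem_closedBall.2 (hd.trans_le ht2)⟩
  obtain ⟨x, hx, hxF⟩ := h x₀ (mem_closedBall_self hδ.le) ρ ⟨hρ.le, h1⟩ hm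
  have hx' := mem_closedBall.1 hx
  rw [hF] at hxF
  have e1 : φ x - φ x₀ = -t := congrArg Prod.fst hxF
  have e2 : g x = g x₀ := congrArg Prod.snd hxF
  refine ⟨x, hεS (mem_ball.2 (hx'.trans_lt h3)), e2 ▸ hx₀C, ?_, by linarith⟩
  rw [← dist_eq_norm]
  exact hx'.trans h2
end

section
/- Let X be a real Banach space and Y a reflexive real Banach space, φ : X → ℝ, g : X → Y, C ⊆ Y nonempty closed convex, x₀ ∈ g⁻¹(C), c > 0, and define F_{x₀}(x) = (φ(x) − φ(x₀), g(x)) ∈ ℝ × Y. Assume: (i) φ and g are differentiable with Lipschitz continuous derivatives on int B(x₀, r₀) for some r₀ > 0 and DF_{x₀}(x₀) : X → ℝ × Y is surjective; (ii) reg(F_{x₀}, x₀) · lip(DF_{x₀}, int B(x₀, r₀)) / 8 < c. Then there exists ρ ∈ (0, r₀) such that for every S ∈ U_c(X) with x₀ ∈ int S, S ⊆ B(x₀, ρ) and F_{x₀}(S) closed: (t) there exists a global solution x̄ ∈ S ∩ g⁻¹(C) of the problem of minimizing φ over S ∩ g⁻¹(C); (tt) x̄ belongs to the boundary of S (and hence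 to the boundary of S ∩ g⁻¹(C)); (ttt) there exists y* ∈ Y* with ⟨y*, y − g(x̄)⟩ ≤ 0 for all y ∈ C, such that φ(x̄) + ⟨y*, g(x̄)⟩ = min_{x ∈ S} (φ(x) + ⟨y*, g(x)⟩). -/
open Metric Set
open scoped NNReal ENNReal

open Filter Topology in
theorem aux_convex_of_midpoint {E : Type*} [NormedAddCommGroup E] [NormedSpace ℝ E]
    {A : Set E} (hA : IsClosed A) (hm : ∀ a ∈ A, ∀ b ∈ A, midpoint ℝ a b ∈ A) : Convex ℝ A := by
  rw [convex_iff_segment_subset]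
  intro a ha b hb z hz
  rw [segment_eq_image_lineMap] at hz
  obtain ⟨t, ht, rfl⟩ := hz
  by_contra hnt
  set T : Set ℝ := {s | AffineMap.lineMap a b s ∈ A} with hT
  have hTc : IsClosed T := hA.preimage (by
    have : Continuous (AffineMap.lineMap a b : ℝ →ᵃ[ℝ] E) := AffineMap.lineMap_continuous
    exact this)
  have h0 : (0 : ℝ) ∈ T := by simpa [hT] using ha
  have h1 : (1 : ℝ) ∈ T := by simpa [hT] using hb
  have hp : sSup (T ∩ Icc 0 t) ∈ T ∩ Icc 0 t :=
    (hTc.inter isClosed_Icc).csSup_mem ⟨0, h0, le_rfl, ht.1⟩ ⟨t, fun x hx => hx.2.2⟩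
  have hq : sInf (T ∩ Icc t 1) ∈ T ∩ Icc t 1 :=
    (hTc.inter isClosed_Icc).csInf_mem ⟨1, h1, ht.2, le_rfl⟩ ⟨t, fun x hx => hx.2.1⟩
  set p := sSup (T ∩ Icc 0 t) with hpd
  set q := sInf (T ∩ Icc t 1) with hqd
  have hpt : p < t := lt_of_le_of_ne hp.2.2 (fun h => hnt (h ▸ hp.1))
  have hqt : t < q := lt_of_le_of_ne hq.2.1 (fun h => hnt (h ▸ hq.1))
  have hmid : (p + q) / 2 ∈ T := by
    have := hm _ hp.1 _ hq.1
    rw [← AffineMap.map_midpoint] at this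
    have e : midpoint ℝ p q = (p + q) / 2 := by
      rw [midpoint_eq_smul_add]; simp; ring
    rw [e] at this
    exact this
  rcases le_total ((p + q) / 2) t with h | h
  · have : (p + q) / 2 ≤ p :=
      le_csSup ⟨t, fun x hx => hx.2.2⟩ ⟨hmid, by linarith [hp.2.1], h⟩
    linarith
  · have : q ≤ (p + q) / 2 :=
      csInf_le ⟨t, fun x hx => hx.2.1⟩ ⟨hmid, h, by linarith [hq.2.2]⟩
    linarith

theorem aux_estimate {X Z : Type*} [NormedAddCommGroup X] [NormedSpace ℝ X]
    [NormedAddCommGroup Z] [NormedSpace ℝ Z] {F : X → Z} {U : Set X} (hU : Convex ℝ U)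
    (hd : ∀ x ∈ U, DifferentiableAt ℝ F x) {L : ℝ} 
    (hL : ∀ x₁ ∈ U, ∀ x₂ ∈ U, dist (fderiv ℝ F x₁) (fderiv ℝ F x₂) ≤ L * dist x₁ x₂)
    {x₁ x₂ : X} (h₁ : x₁ ∈ U) (h₂ : x₂ ∈ U) :
    ‖midpoint ℝ (F x₁) (F x₂) - F (midpoint ℝ x₁ x₂)‖ ≤ L / 8 * ‖x₁ - x₂‖ ^ 2 := by
  set m := midpoint ℝ x₁ x₂ with hm
  set h := (2⁻¹ : ℝ) • (x₁ - x₂) with hh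
  have e1 : m + h = x₁ := by rw [hm, hh, midpoint_eq_smul_add]; simp; module
  have e2 : m - h = x₂ := by rw [hm, hh, midpoint_eq_smul_add]; simp; module
  have hmem : ∀ t ∈ Icc (0:ℝ) 1, m + t • h ∈ U ∧ m - t • h ∈ U := by
    intro t ht
    have k1 : m + t • h = ((1 + t) / 2) • x₁ + ((1 - t) / 2) • x₂ := by
      rw [← e1, ← e2]; module
    have k2 : m - t • h = ((1 - t) / 2) • x₁ + ((1 + t) / 2) • x₂ := by
      rw [← e1, ← e2]; module
    rw [k1, k2]
    exact ⟨hU h₁ h₂ (by linarith [ht.1]) (by linarith [ht.2]) (by ring),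
      hU h₁ h₂ (by linarith [ht.2]) (by linarith [ht.1]) (by ring)⟩
  have hder : ∀ t ∈ Icc (0:ℝ) 1, HasDerivAt (fun t : ℝ => F (m + t • h) + F (m - t • h) - (2:ℝ) • F m)
      (fderiv ℝ F (m + t • h) h - fderiv ℝ F (m - t • h) h) t := by
    intro t ht
    have d1 : HasDerivAt (fun t : ℝ => m + t • h) h t := by
      simpa using ((hasDerivAt_id t).smul_const h).const_add m
    have d2 : HasDerivAt (fun t : ℝ => m - t • h) (-h) t := by
      simpa using ((hasDerivAt_id t).smul_const h).const_sub m
    have f1 := (hd _ (hmem t ht).1).hasFDerivAt.comp_hasDerivAt t d1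
    have f2 := (hd _ (hmem t ht).2).hasFDerivAt.comp_hasDerivAt t d2
    have := (f1.add f2).sub_const ((2:ℝ) • F m)
    simpa [sub_eq_add_neg] using this
  have key := image_norm_le_of_norm_deriv_right_le_deriv_boundary
    (f := fun t : ℝ => F (m + t • h) + F (m - t • h) - (2:ℝ) • F m)
    (f' := fun t => fderiv ℝ F (m + t • h) h - fderiv ℝ F (m - t • h) h)
    (a := 0) (b := 1) (B := fun t => L * ‖h‖ ^ 2 * t ^ 2) (B' := fun t => L * ‖h‖ ^ 2 * (2 * t))
    (fun t ht => (hder t ht).continuousAt.continuousWithinAt)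
    (fun t ht => (hder t ⟨ht.1, ht.2.le⟩).hasDerivWithinAt)
    (by simp [two_smul]) 
    (fun t => by simpa using (hasDerivAt_pow 2 t).const_mul (L * ‖h‖ ^ 2))
    (fun t ht => by
      have q := hmem t ⟨ht.1, ht.2.le⟩
      have l := hL _ q.1 _ q.2
      rw [← ContinuousLinearMap.sub_apply]
      refine (ContinuousLinearMap.le_opNorm _ _).trans ?_
      rw [dist_eq_norm, dist_eq_norm] at l
      have : m + t • h - (m - t • h) = (2 * t) • h := by module
      rw [this, norm_smul, Real.norm_of_nonneg (by linarith [ht.1])] at l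
      nlinarith [norm_nonneg h])
    (x := 1) (by simp)
  simp only [one_smul, e1, e2] at key
  have hn : ‖h‖ = ‖x₁ - x₂‖ / 2 := by
    rw [hh, norm_smul]; norm_num; ring
  have : midpoint ℝ (F x₁) (F x₂) - F m = (2⁻¹ : ℝ) • (F x₁ + F x₂ - (2:ℝ) • F m) := by
    rw [midpoint_eq_smul_add]; simp; module
  rw [this, norm_smul]
  rw [hn] at key
  norm_num at key ⊢
  nlinarith

open Filter Topology in
theorem aux_uc {X : Type*} [NormedAddCommGroup X] [NormedSpace ℝ X] {c : ℝ} {S : Set X}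
    (hS : UniformlyConvexWith c S) (hb : Bornology.IsBounded S) {x₁ x₂ x : X} (h₁ : x₁ ∈ S)
    (h₂ : x₂ ∈ S) (hne : x₁ ≠ x₂) (hx : ‖x - midpoint ℝ x₁ x₂‖ < c * ‖x₁ - x₂‖ ^ 2) : x ∈ S := by
  obtain ⟨-, -, hconv, hmod⟩ := hS
  have main : ∀ y₁ ∈ S, ∀ y₂ ∈ S, y₁ ≠ y₂ → ‖y₁ - y₂‖ < diam S →
      ‖x - midpoint ℝ y₁ y₂‖ < c * ‖y₁ - y₂‖ ^ 2 → x ∈ S := by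
    intro y₁ hy₁ y₂ hy₂ hy hd hxy
    have h := hmod ‖y₁ - y₂‖ (norm_pos_iff.2 (sub_ne_zero.2 hy)) hd
    have h' := hxy.trans_le h
    unfold setModulus at h'
    obtain ⟨δ, hδ, hlt⟩ := exists_lt_of_lt_csSup (by
      refine ⟨0, le_rfl, fun a ha b hb _ => ?_⟩
      simpa using hconv.midpoint_mem ha hb) h'
    exact hδ.2 _ hy₁ _ hy₂ rfl (by rw [mem_closedBall, dist_eq_norm]; exact hlt.le)
  have hle : ‖x₁ - x₂‖ ≤ diam S := by
    rw [← dist_eq_norm]; exact dist_le_diam_of_mem hb h₁ h₂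
  rcases hle.lt_or_eq with hlt | heq
  · exact main _ h₁ _ h₂ hne hlt hx
  have hpos : 0 < ‖x₁ - x₂‖ := norm_pos_iff.2 (sub_ne_zero.2 hne)
  have hcont : Continuous fun t : ℝ => c * ‖(x₂ + t • (x₁ - x₂)) - x₂‖ ^ 2 -
      ‖x - midpoint ℝ (x₂ + t • (x₁ - x₂)) x₂‖ := by
    simp only [midpoint_eq_smul_add]
    fun_prop
  have hev : ∀ᶠ t in 𝓝 (1:ℝ), 0 < c * ‖(x₂ + t • (x₁ - x₂)) - x₂‖ ^ 2 -
      ‖x - midpoint ℝ (x₂ + t • (x₁ - x₂)) x₂‖ := by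
    refine hcont.continuousAt.eventually_const_lt ?_
    simp only [one_smul, add_sub_cancel]
    linarith
  have hev2 : ∀ᶠ t in 𝓝[<] (1:ℝ), t ∈ Ioo (0:ℝ) 1 := Ioo_mem_nhdsLT one_pos
  obtain ⟨t, ht, ht2⟩ := ((hev.filter_mono nhdsWithin_le_nhds).and hev2).exists
  have hn : ‖(x₂ + t • (x₁ - x₂)) - x₂‖ = t * ‖x₁ - x₂‖ := by
    rw [add_sub_cancel_left, norm_smul, Real.norm_of_nonneg ht2.1.le]
  refine main (x₂ + t • (x₁ - x₂)) (hconv.add_smul_sub_mem h₂ h₁ ⟨ht2.1.le, ht2.2.le⟩) x₂ h₂ ?_ ?_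
    (by linarith)
  · intro h
    rw [h, sub_self, norm_zero] at hn
    nlinarith [ht2.1]
  · rw [hn, ← heq]
    nlinarith [ht2.2]

theorem aux_ball {E : Type*} [NormedAddCommGroup E] [NormedSpace ℝ E] {f : StrongDual ℝ E}
    {R : ℝ} (h : ‖f‖ ≤ R) : f ∈ closedBall (0 : StrongDual ℝ E) R := by
  simpa using h

open Filter Topology in
theorem aux_min {Y : Type*} [NormedAddCommGroup Y] [NormedSpace ℝ Y]
    (hrefl : Function.Surjective (NormedSpace.inclusionInDoubleDual ℝ Y))
    {Q : Set (ℝ × Y)} (hne : Q.Nonempty) (hcl : IsClosed Q) (hconv : Convex ℝ Q)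
    (hb : Bornology.IsBounded Q) : ∃ q ∈ Q, ∀ p ∈ Q, q.1 ≤ p.1 := by
  obtain ⟨R, hR⟩ := hb.exists_norm_le
  set m := sInf (Prod.fst '' Q) with hm
  have hbdd : BddBelow (Prod.fst '' Q) := by
    refine ⟨-R, ?_⟩
    rintro _ ⟨q, hq, rfl⟩
    have := (norm_fst_le q).trans (hR q hq)
    rw [Real.norm_eq_abs] at this
    exact (abs_le.1 this).1
  obtain ⟨u, -, hu, huQ⟩ := exists_seq_tendsto_sInf (hne.image Prod.fst) hbdd
  choose q hqQ hqu using huQ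
  have htend : Tendsto (fun n => (q n).1) atTop (𝓝 m) := by
    simpa only [hqu] using hu
  have hcomp := WeakDual.isCompact_closedBall (𝕜 := ℝ) (E := StrongDual ℝ Y) 0 R
  let v : ℕ → WeakDual ℝ (StrongDual ℝ Y) := fun n =>
    StrongDual.toWeakDual (NormedSpace.inclusionInDoubleDual ℝ Y (q n).2)
  let 𝒰 : Ultrafilter ℕ := Ultrafilter.of atTop
  have h𝒰 : (𝒰 : Filter ℕ) ≤ atTop := Ultrafilter.of_le atTop
  have hv : ∀ n, v n ∈ (WeakDual.toStrongDual ⁻¹' closedBall (0 : StrongDual ℝ (StrongDual ℝ Y)) R) := by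
    intro n
    have hz : ‖NormedSpace.inclusionInDoubleDual ℝ Y (q n).2‖ ≤ R := ((NormedSpace.double_dual_bound ℝ Y (q n).2).trans ((norm_snd_le _).trans (hR _ (hqQ n))))
    have hz2 : NormedSpace.inclusionInDoubleDual ℝ Y (q n).2 ∈
        closedBall (0 : StrongDual ℝ (StrongDual ℝ Y)) R :=
      aux_ball (E := StrongDual ℝ Y) hz
    exact hz2
  obtain ⟨w, -, hw⟩ := hcomp.ultrafilter_le_nhds (𝒰.map v)
    (by rw [le_principal_iff]; exact Filter.mem_map.2 (Filter.univ_mem' hv))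
  obtain ⟨y, hy⟩ := hrefl (WeakDual.toStrongDual w)
  have hlim : ∀ f : StrongDual ℝ Y, Tendsto (fun n => f (q n).2) 𝒰 (𝓝 (f y)) := by
    intro f
    have h1 : Tendsto v 𝒰 (𝓝 w) := hw
    have h2 := ((WeakDual.eval_continuous f).tendsto w).comp h1
    have h3 : w f = f y := by
      have := congrArg (fun L : StrongDual ℝ (StrongDual ℝ Y) => L f) hy
      simp only [NormedSpace.dual_def] at this
      exact this.symm
    rw [h3] at h2
    exact h2
  refine ⟨(m, y), ?_, fun p hp => csInf_le hbdd ⟨p, hp, rfl⟩⟩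
  by_contra hnot
  obtain ⟨f, a, hf1, hf2⟩ := geometric_hahn_banach_closed_point hconv hcl hnot
  have hsplit : ∀ p : ℝ × Y, f p = p.1 * f (1, 0) + (f.comp (ContinuousLinearMap.inr ℝ ℝ Y)) p.2 := by
    intro p
    have : p = p.1 • ((1 : ℝ), (0 : Y)) + (0, p.2) := by ext <;> simp
    conv_lhs => rw [this]
    rw [map_add, map_smul]
    simp
  have hl : Tendsto (fun n => f (q n)) 𝒰 (𝓝 (f (m, y))) := by
    have e : (fun n => f (q n)) = fun n => (q n).1 * f (1, 0) +
        (f.comp (ContinuousLinearMap.inr ℝ ℝ Y)) (q n).2 := funext fun n => hsplit _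
    rw [e, hsplit (m, y)]
    exact ((htend.mono_left h𝒰).mul_const _).add (hlim _)
  have := le_of_tendsto hl (Filter.Eventually.of_forall fun n => (hf1 _ (hqQ n)).le)
  linarith

open Filter Topology in
theorem aux_mult {Y : Type*} [NormedAddCommGroup Y] [NormedSpace ℝ Y]
    {A : Set (ℝ × Y)} (hA : Convex ℝ A) {C : Set Y} (hC : Convex ℝ C) {p q : ℝ × Y}
    (hp : p ∈ interior A) (hpC : p.2 ∈ C) (hq : q ∈ A) (hqC : q.2 ∈ C)
    (hmin : ∀ a ∈ A, a.2 ∈ C → q.1 ≤ a.1) :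
    ∃ ystar : Y →L[ℝ] ℝ, (∀ y ∈ C, ystar (y - q.2) ≤ 0) ∧
      ∀ a ∈ A, q.1 + ystar q.2 ≤ a.1 + ystar a.2 := by
  have hdisj : Disjoint (interior A) (Iio q.1 ×ˢ C) := by
    rw [Set.disjoint_left]
    intro a ha haD
    exact absurd (hmin a (interior_subset ha) haD.2) (not_le.2 haD.1)
  obtain ⟨f, u, hf1, hf2⟩ := geometric_hahn_banach_open hA.interior isOpen_interior
    ((convex_Iio q.1).prod hC) hdisj
  set α := f (1, 0) with hα
  set l := f.comp (ContinuousLinearMap.inr ℝ ℝ Y) with hl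
  have hsplit : ∀ p : ℝ × Y, f p = p.1 * α + l p.2 := by
    intro p
    have : p = p.1 • ((1 : ℝ), (0 : Y)) + (0, p.2) := by ext <;> simp
    conv_lhs => rw [this]
    rw [map_add, map_smul]
    simp [hα, hl]
  have hfA : ∀ a ∈ A, a.1 * α + l a.2 ≤ u := by
    intro a ha
    have h1 : a ∈ closure (interior A) := by
      rw [hA.closure_interior_eq_closure_of_nonempty_interior ⟨p, hp⟩]
      exact subset_closure ha
    rw [← hsplit]
    exact closure_minimal (fun b hb => (hf1 b hb).le)
      (isClosed_le f.continuous continuous_const) h1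
  have hfC' : ∀ t < q.1, ∀ y ∈ C, u ≤ t * α + l y := by
    intro t ht y hy
    have := hf2 (t, y) ⟨ht, hy⟩
    rwa [hsplit] at this
  have hfC : ∀ y ∈ C, u ≤ q.1 * α + l y := by
    intro y hy
    have hc : Tendsto (fun t : ℝ => t * α + l y) (𝓝[<] q.1) (𝓝 (q.1 * α + l y)) := by
      apply Tendsto.mono_left _ nhdsWithin_le_nhds
      exact Continuous.tendsto (by fun_prop) _
    exact ge_of_tendsto hc (by
      filter_upwards [self_mem_nhdsWithin] with t ht using hfC' t ht y hy)
  have hpu := hf1 p hp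
  rw [hsplit] at hpu
  have hα0 : α < 0 := by
    have h := hfC _ hpC
    have h2 := hmin p (interior_subset hp) hpC
    have h3 := hfC' (q.1 - 1) (by linarith) _ hpC
    by_contra hh
    push Not at hh
    nlinarith
  refine ⟨α⁻¹ • l, ?_, ?_⟩
  · intro y hy
    have h1 := hfA q hq
    have h2 := hfC y hy
    simp only [ContinuousLinearMap.smul_apply, smul_eq_mul, map_sub]
    have h3 : 0 ≤ l y - l q.2 := by linarith
    rw [← mul_sub]
    exact mul_nonpos_of_nonpos_of_nonneg (inv_nonpos.2 hα0.le) h3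
  · intro a ha
    have h1 := hfA a ha
    have h2 := hfC _ hqC
    simp only [ContinuousLinearMap.smul_apply, smul_eq_mul]
    have h3 : a.1 * α + l a.2 ≤ q.1 * α + l q.2 := h1.trans h2
    have h4 := mul_le_mul_of_nonpos_left h3 (inv_nonpos.2 hα0.le)
    have e : ∀ s r : ℝ, α⁻¹ * (s * α + r) = s + α⁻¹ * r := by
      intro s r; field_simp [hα0.ne]
    rwa [e, e] at h4

open Filter Topology in
theorem aux_solve {X Z : Type*} [NormedAddCommGroup X] [NormedSpace ℝ X]
    [NormedAddCommGroup Z] [NormedSpace ℝ Z] {F : X → Z} {x₀ : X} {r₀ c : ℝ} (hr₀ : 0 < r₀)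
    (hc : 0 < c)
    (hd : ∀ x ∈ ball x₀ r₀, DifferentiableAt ℝ F x) {K : ℝ} (hK : 0 ≤ K)
    (hL : ∀ x₁ ∈ ball x₀ r₀, ∀ x₂ ∈ ball x₀ r₀,
      dist (fderiv ℝ F x₁) (fderiv ℝ F x₂) ≤ K * dist x₁ x₂)
    (hopen : map F (𝓝 x₀) = 𝓝 (F x₀))
    (hreg : regBound F x₀ * ENNReal.ofReal (lipOn (fderiv ℝ F) (ball x₀ r₀)) / 8
      < ENNReal.ofReal c) :
    ∀ᶠ ρ in 𝓝[>] (0:ℝ), ∀ x₁ ∈ closedBall x₀ ρ, ∀ x₂ ∈ closedBall x₀ ρ, x₁ ≠ x₂ →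
      ∃ x, F x = midpoint ℝ (F x₁) (F x₂) ∧ ‖x - midpoint ℝ x₁ x₂‖ < c * ‖x₁ - x₂‖ ^ 2 := by
  set L := lipOn (fderiv ℝ F) (ball x₀ r₀) with hLdef
  have hLmem : 0 ≤ L ∧ ∀ x₁ ∈ ball x₀ r₀, ∀ x₂ ∈ ball x₀ r₀,
      dist (fderiv ℝ F x₁) (fderiv ℝ F x₂) ≤ L * dist x₁ x₂ := by
    have hcl : IsClosed {ℓ : ℝ | 0 ≤ ℓ ∧ ∀ x₁ ∈ ball x₀ r₀, ∀ x₂ ∈ ball x₀ r₀,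
      dist (fderiv ℝ F x₁) (fderiv ℝ F x₂) ≤ ℓ * dist x₁ x₂} := by
      simp only [setOf_and, setOf_forall]
      refine (isClosed_le continuous_const continuous_id).inter ?_
      refine isClosed_iInter fun a => isClosed_iInter fun _ => isClosed_iInter fun b =>
        isClosed_iInter fun _ => isClosed_le continuous_const (by fun_prop)
    exact hcl.csInf_mem ⟨K, hK, hL⟩ ⟨0, fun x hx => hx.1⟩
  obtain ⟨hL0, hLip⟩ := hLmem
  have hball : ∀ᶠ ρ in 𝓝[>] (0:ℝ), ρ < r₀ :=
    (eventually_lt_nhds hr₀).filter_mono nhdsWithin_le_nhds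
  have hest : ∀ ρ < r₀, ∀ x₁ ∈ closedBall x₀ ρ, ∀ x₂ ∈ closedBall x₀ ρ,
      ‖midpoint ℝ (F x₁) (F x₂) - F (midpoint ℝ x₁ x₂)‖ ≤ L / 8 * ‖x₁ - x₂‖ ^ 2 := by
    intro ρ hρ x₁ h₁ x₂ h₂
    exact aux_estimate (convex_ball x₀ r₀) hd hLip (closedBall_subset_ball hρ h₁)
      (closedBall_subset_ball hρ h₂)
  rcases hL0.eq_or_lt with h0 | hpos
  · filter_upwards [hball] with ρ hρ x₁ h₁ x₂ h₂ hne
    have := hest ρ hρ x₁ h₁ x₂ h₂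
    rw [← h0] at this
    refine ⟨midpoint ℝ x₁ x₂, ?_, ?_⟩
    · rw [zero_div, zero_mul] at this
      exact (sub_eq_zero.1 (norm_le_zero_iff.1 this)).symm
    · have := norm_pos_iff.2 (sub_ne_zero.2 hne)
      simp only [sub_self, norm_zero]
      positivity
  have hκ : ∃ κ : ℝ, κ * L / 8 < c ∧ 0 ≤ κ ∧ ∃ δ > 0,
    ∀ x ∈ closedBall x₀ δ, ∀ y ∈ closedBall (F x₀) δ,
      Metric.infDist x {x' | F x' = y} ≤ κ * ‖y - F x‖ := by
    by_contra hcon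
    push Not at hcon
    have hle : ENNReal.ofReal (8 * c / L) ≤ regBound F x₀ := by
      refine le_sInf ?_
      rintro _ ⟨κ, hκ, rfl⟩
      apply ENNReal.ofReal_le_ofReal
      rw [div_le_iff₀ hpos]
      by_contra hlt
      push Not at hlt
      obtain ⟨δ, hδ, h⟩ := hκ.2
      obtain ⟨x, hx, y, hy, h'⟩ := hcon κ (by linarith) hκ.1 δ hδ
      exact absurd (h x hx y hy) (not_le.2 h')
    have : ENNReal.ofReal c ≤ regBound F x₀ * ENNReal.ofReal L / 8 := by
      calc ENNReal.ofReal c = ENNReal.ofReal (8 * c / L) * ENNReal.ofReal L / 8 := by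
            rw [← ENNReal.ofReal_mul (by positivity)]
            have : (8 : ℝ≥0∞) = ENNReal.ofReal 8 := by simp
            rw [this, ← ENNReal.ofReal_div_of_pos (by norm_num)]
            congr 1
            field_simp
        _ ≤ _ := by gcongr
    exact absurd hreg (not_lt.2 this)
  obtain ⟨κ, hκc, hκ0, δ, hδ, hmr⟩ := hκ
  have hrange : range F ∈ 𝓝 (F x₀) := by
    rw [← hopen]; exact range_mem_map
  obtain ⟨η, hη, hηsub⟩ := nhds_basis_closedBall.mem_iff.1 hrange
  have hcont : ContinuousAt F x₀ := hopen.le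
  obtain ⟨ζ, hζ, hζsub⟩ := nhds_basis_closedBall.mem_iff.1
    (hcont.preimage_mem_nhds (closedBall_mem_nhds (F x₀) (lt_min hη hδ)))
  have hs : ∀ᶠ ρ in 𝓝[>] (0:ℝ), ρ < min ζ δ :=
    (eventually_lt_nhds (lt_min hζ hδ)).filter_mono nhdsWithin_le_nhds
  filter_upwards [hball, hs] with ρ hρ hρ2 x₁ h₁ x₂ h₂ hne
  have hρζ : ρ ≤ ζ := hρ2.le.trans (min_le_left _ _)
  have hρδ : ρ ≤ δ := hρ2.le.trans (min_le_right _ _)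
  have hymem : midpoint ℝ (F x₁) (F x₂) ∈ closedBall (F x₀) (min η δ) :=
    (convex_closedBall _ _).midpoint_mem (hζsub (closedBall_subset_closedBall hρζ h₁))
      (hζsub (closedBall_subset_closedBall hρζ h₂))
  have hmm : midpoint ℝ x₁ x₂ ∈ closedBall x₀ δ :=
    closedBall_subset_closedBall hρδ ((convex_closedBall _ _).midpoint_mem h₁ h₂)
  have h := hmr _ hmm _ (closedBall_subset_closedBall (min_le_right _ _) hymem)
  have hnon : {x' | F x' = midpoint ℝ (F x₁) (F x₂)}.Nonempty :=
    hηsub (closedBall_subset_closedBall (min_le_left _ _) hymem)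
  have hn := norm_pos_iff.2 (sub_ne_zero.2 hne)
  have hlt : Metric.infDist (midpoint ℝ x₁ x₂) {x' | F x' = midpoint ℝ (F x₁) (F x₂)}
      < c * ‖x₁ - x₂‖ ^ 2 := by
    refine h.trans_lt ?_
    calc _ ≤ κ * (L / 8 * ‖x₁ - x₂‖ ^ 2) := by
          gcongr; exact hest ρ hρ x₁ h₁ x₂ h₂
      _ = κ * L / 8 * ‖x₁ - x₂‖ ^ 2 := by ring
      _ < _ := by gcongr
  obtain ⟨x, hx, hxd⟩ := (Metric.infDist_lt_iff hnon).1 hlt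
  refine ⟨x, hx, ?_⟩
  rwa [dist_comm, dist_eq_norm] at hxd

open Filter Topology in
/-- Theorem 4.3 of the paper: existence of a global solution to the constrained
problem (P) over uniformly convex sets, its location on the boundary, and its
characterization as a minimizer of the Lagrangian. -/
theorem constrained_optimization_solution
    {X Y : Type*} [NormedAddCommGroup X] [NormedSpace ℝ X] [CompleteSpace X]
    [NormedAddCommGroup Y] [NormedSpace ℝ Y] [CompleteSpace Y]
    -- (i) Y is reflexive
    (hrefl : Function.Surjective (NormedSpace.inclusionInDoubleDual ℝ Y))
    (φ : X → ℝ) (g : X → Y)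
    (C : Set Y) (hCne : C.Nonempty) (hCcl : IsClosed C) (hCconv : Convex ℝ C)
    (x₀ : X) (hx₀ : g x₀ ∈ C) (c : ℝ) (hc : 0 < c) (r₀ : ℝ) (hr₀ : 0 < r₀)
    (F : X → ℝ × Y) (hF : F = fun x => (φ x - φ x₀, g x))
    -- (ii) φ, g ∈ C^{1,1}(int B(x₀, r₀)) and DF_{x₀}(x₀) is onto
    (hφdiff : ∀ x ∈ ball x₀ r₀, DifferentiableAt ℝ φ x)
    (hgdiff : ∀ x ∈ ball x₀ r₀, DifferentiableAt ℝ g x)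
    (hφlip : ∃ K : ℝ≥0, LipschitzOnWith K (fderiv ℝ φ) (ball x₀ r₀))
    (hglip : ∃ K : ℝ≥0, LipschitzOnWith K (fderiv ℝ g) (ball x₀ r₀))
    (hsurj : Function.Surjective (fderiv ℝ F x₀))
    -- (iii) reg(F_{x₀}, x₀) · lip(DF_{x₀}, int B(x₀, r₀)) / 8 < c
    (hreg : regBound F x₀ * ENNReal.ofReal (lipOn (fderiv ℝ F) (ball x₀ r₀)) / 8
      < ENNReal.ofReal c) :
    ∃ ρ : ℝ, 0 < ρ ∧ ρ < r₀ ∧ ∀ S : Set X, UniformlyConvexWith c S →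
      x₀ ∈ interior S → S ⊆ closedBall x₀ ρ → IsClosed (F '' S) →
      ∃ xbar ∈ S ∩ g ⁻¹' C,
        -- (t) xbar is a global solution of (P)
        (∀ x ∈ S ∩ g ⁻¹' C, φ xbar ≤ φ x) ∧
        -- (tt) xbar lies on the boundary of S and of the feasible region
        xbar ∈ frontier S ∧ xbar ∈ frontier (S ∩ g ⁻¹' C) ∧
        -- (ttt) Lagrangian characterization with a normal-cone multiplier
        ∃ ystar : Y →L[ℝ] ℝ, (∀ y ∈ C, ystar (y - g xbar) ≤ 0) ∧
          ∀ x ∈ S, φ xbar + ystar (g xbar) ≤ φ x + ystar (g x) := by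
  have hdF : ∀ x ∈ ball x₀ r₀, HasFDerivAt F ((fderiv ℝ φ x).prod (fderiv ℝ g x)) x := by
    intro x hx
    rw [hF]
    exact ((hφdiff x hx).hasFDerivAt.sub_const _).prodMk (hgdiff x hx).hasFDerivAt
  obtain ⟨K₁, hK₁⟩ := hφlip
  obtain ⟨K₂, hK₂⟩ := hglip
  have hlip : ∀ x₁ ∈ ball x₀ r₀, ∀ x₂ ∈ ball x₀ r₀,
      dist (fderiv ℝ F x₁) (fderiv ℝ F x₂) ≤ ((K₁ + K₂ : ℝ≥0) : ℝ) * dist x₁ x₂ := by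
    intro x₁ h₁ x₂ h₂
    have a := hK₁.dist_le_mul x₁ h₁ x₂ h₂
    have b := hK₂.dist_le_mul x₁ h₁ x₂ h₂
    rw [(hdF x₁ h₁).fderiv, (hdF x₂ h₂).fderiv, dist_eq_norm]
    refine ContinuousLinearMap.opNorm_le_bound _ (by positivity) fun v => ?_
    rw [dist_eq_norm] at a b
    have a' := (ContinuousLinearMap.le_opNorm (fderiv ℝ φ x₁ - fderiv ℝ φ x₂) v).trans
      (mul_le_mul_of_nonneg_right a (norm_nonneg v))
    have b' := (ContinuousLinearMap.le_opNorm (fderiv ℝ g x₁ - fderiv ℝ g x₂) v).trans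
      (mul_le_mul_of_nonneg_right b (norm_nonneg v))
    have p1 : 0 ≤ (K₁ : ℝ) * dist x₁ x₂ * ‖v‖ := by positivity
    have p2 : 0 ≤ (K₂ : ℝ) * dist x₁ x₂ * ‖v‖ := by positivity
    have e : ((K₁ + K₂ : ℝ≥0) : ℝ) * dist x₁ x₂ * ‖v‖
      = (K₁ : ℝ) * dist x₁ x₂ * ‖v‖ + (K₂ : ℝ) * dist x₁ x₂ * ‖v‖ := by
      push_cast; ring
    rw [e]
    refine max_le ?_ ?_
    · exact a'.trans (by linarith)
    · exact b'.trans (by linarith)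
  have hd : ∀ x ∈ ball x₀ r₀, DifferentiableAt ℝ F x := fun x hx => (hdF x hx).differentiableAt
  have hball : ball x₀ r₀ ∈ 𝓝 x₀ := ball_mem_nhds x₀ hr₀
  have hcontd : ContinuousAt (fderiv ℝ F) x₀ := by
    have : LipschitzOnWith (K₁ + K₂) (fderiv ℝ F) (ball x₀ r₀) :=
      LipschitzOnWith.of_dist_le_mul hlip
    exact this.continuousOn.continuousAt hball
  have hstrict : HasStrictFDerivAt F (fderiv ℝ F x₀) x₀ :=
    hasStrictFDerivAt_of_hasFDerivAt_of_continuousAt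
      (Filter.mem_of_superset hball fun x hx => (hd x hx).hasFDerivAt) hcontd
  have hrange : (fderiv ℝ F x₀).range = ⊤ := LinearMap.range_eq_top.2 hsurj
  obtain ⟨s, hs, hsopen⟩ : ∃ s ∈ 𝓝 x₀, ∀ x, s ∈ 𝓝 x → map F (𝓝 x) = 𝓝 (F x) := by
    let f'symm := (fderiv ℝ F x₀).nonlinearRightInverseOfSurjective hrange
    have f'symm_pos : 0 < f'symm.nnnorm :=
      (fderiv ℝ F x₀).nonlinearRightInverseOfSurjective_nnnorm_pos hrange
    have cpos : 0 < f'symm.nnnorm⁻¹ / 2 := by simp [f'symm_pos]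
    obtain ⟨s, s_nhds, hs⟩ := hstrict.approximates_deriv_on_nhds (Or.inr cpos)
    refine ⟨s, s_nhds, fun x hx => hs.map_nhds_eq f'symm hx (Or.inr (NNReal.half_lt_self ?_))⟩
    simp [ne_of_gt f'symm_pos]
  obtain ⟨ζ, hζ, hζs⟩ := nhds_basis_ball.mem_iff.1 hs
  have hFc : ContinuousAt F x₀ := (hd x₀ (mem_ball_self hr₀)).continuousAt
  obtain ⟨ξ, hξ, hξs⟩ := nhds_basis_closedBall.mem_iff.1
    (hFc.preimage_mem_nhds (closedBall_mem_nhds (F x₀) one_pos))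
  have hsmall : ∀ᶠ ρ in 𝓝[>] (0:ℝ), ρ < min r₀ (min ζ ξ) :=
    (eventually_lt_nhds (lt_min hr₀ (lt_min hζ hξ))).filter_mono nhdsWithin_le_nhds
  have hpos : ∀ᶠ ρ in 𝓝[>] (0:ℝ), 0 < ρ := self_mem_nhdsWithin
  have hsolve := aux_solve hr₀ hc hd (K := ((K₁ + K₂ : ℝ≥0) : ℝ)) (NNReal.coe_nonneg _) hlip
    (hsopen x₀ hs) hreg
  obtain ⟨ρ, hρsolve, hρsmall, hρ⟩ := (hsolve.and (hsmall.and hpos)).exists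
  have hρr : ρ < r₀ := hρsmall.trans_le (min_le_left _ _)
  have hρζ : ρ < ζ := hρsmall.trans_le ((min_le_right _ _).trans (min_le_left _ _))
  have hρξ : ρ < ξ := hρsmall.trans_le ((min_le_right _ _).trans (min_le_right _ _))
  refine ⟨ρ, hρ, hρr, ?_⟩
  intro S hS hx₀S hSρ hFS
  have hSb : Bornology.IsBounded S := isBounded_closedBall.subset hSρ
  have hopenS : ∀ x ∈ S, map F (𝓝 x) = 𝓝 (F x) := fun x hx =>
    hsopen x (Filter.mem_of_superset
      (isOpen_ball.mem_nhds (closedBall_subset_ball hρζ (hSρ hx))) hζs)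
  have hconv : Convex ℝ (F '' S) := by
    refine aux_convex_of_midpoint hFS ?_
    rintro _ ⟨x₁, h₁, rfl⟩ _ ⟨x₂, h₂, rfl⟩
    by_cases hne : x₁ = x₂
    · subst hne
      rw [midpoint_self]
      exact ⟨x₁, h₁, rfl⟩
    obtain ⟨x, hx, hxd⟩ := hρsolve x₁ (hSρ h₁) x₂ (hSρ h₂) hne
    exact ⟨x, aux_uc hS hSb h₁ h₂ hne hxd, hx⟩
  have hFb : Bornology.IsBounded (F '' S) := by
    refine (isBounded_closedBall (x := F x₀) (r := 1)).subset ?_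
    rintro _ ⟨x, hx, rfl⟩
    exact hξs (closedBall_subset_closedBall hρξ.le (hSρ hx))
  have hF1 : ∀ x, (F x).1 = φ x - φ x₀ := fun x => by rw [hF]
  have hF2 : ∀ x, (F x).2 = g x := fun x => by rw [hF]
  have hx₀S' : x₀ ∈ S := interior_subset hx₀S
  obtain ⟨q, ⟨⟨xbar, hxS, rfl⟩, hqC⟩, hqmin⟩ := aux_min hrefl (Q := F '' S ∩ Prod.snd ⁻¹' C)
    ⟨F x₀, ⟨x₀, hx₀S', rfl⟩, by rw [mem_preimage, hF2]; exact hx₀⟩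
    (hFS.inter (hCcl.preimage continuous_snd))
    (hconv.inter (hCconv.linear_preimage (LinearMap.snd ℝ ℝ Y))) (hFb.subset inter_subset_left)
  rw [mem_preimage, hF2] at hqC
  have hnotint : xbar ∉ interior S := by
    intro hint
    have hn : F '' S ∈ 𝓝 (F xbar) := by
      rw [← hopenS xbar hxS]
      exact Filter.image_mem_map (mem_interior_iff_mem_nhds.1 hint)
    have hc' : ContinuousAt (fun t : ℝ => ((F xbar).1 - t, (F xbar).2)) 0 := by fun_prop
    have hev : ∀ᶠ t in 𝓝 (0:ℝ), ((F xbar).1 - t, (F xbar).2) ∈ F '' S :=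
      hc'.preimage_mem_nhds (by simpa using hn)
    obtain ⟨t, ht, htpos⟩ := ((hev.filter_mono nhdsWithin_le_nhds).and
      (self_mem_nhdsWithin : Ioi (0:ℝ) ∈ 𝓝[>] (0:ℝ))).exists
    have h1 := hqmin _ ⟨ht, by rw [mem_preimage, hF2]; exact hqC⟩
    have h2 : 0 < t := htpos
    simp only at h1
    linarith
  refine ⟨xbar, ⟨hxS, hqC⟩, ?_, ⟨subset_closure hxS, hnotint⟩,
    ⟨subset_closure ⟨hxS, hqC⟩, fun h => hnotint (interior_mono inter_subset_left h)⟩, ?_⟩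
  · intro x hx
    have := hqmin (F x) ⟨⟨x, hx.1, rfl⟩, by rw [mem_preimage, hF2]; exact hx.2⟩
    rw [hF1, hF1] at this
    linarith
  · have hint : F x₀ ∈ interior (F '' S) := by
      rw [mem_interior_iff_mem_nhds, ← hopenS x₀ hx₀S']
      exact Filter.image_mem_map (mem_interior_iff_mem_nhds.1 hx₀S)
    obtain ⟨ystar, h1, h2⟩ := aux_mult hconv hCconv (p := F x₀) (q := F xbar) hint
      (by rw [hF2]; exact hx₀) ⟨xbar, hxS, rfl⟩ (by rw [hF2]; exact hqC)
      (fun a ha haC => hqmin a ⟨ha, haC⟩)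
    rw [hF2] at h1
    refine ⟨ystar, h1, fun x hx => ?_⟩
    have := h2 (F x) ⟨x, hx, rfl⟩
    rw [hF1, hF1, hF2, hF2] at this
    linarith
end

section
/- In the setting of the constrained problem (P) with C ⊆ Y a closed convex cone with apex at the origin, assume all hypotheses of the solvability theorem: Y reflexive, x₀ ∈ g⁻¹(C), c > 0, φ, g of class C^{1,1} on int B(x₀, r₀), DF_{x₀}(x₀) surjective onto ℝ × Y, reg(F_{x₀}, x₀)·lip(DF_{x₀}, int B(x₀, r₀))/8 < c, and S ∈ U_c(X) with x₀ ∈ int S ⊆ B(x₀, ρ) and F_{x₀}(S) closed (ρ as given by that theorem). Then the Lagrangian duality gap vanishes, inf_{x ∈ S} sup_{y* ∈ C⊖} L(y*, x) = sup_{y* ∈ C⊖} inf_{x ∈ S} L(y*, x), and there exists a pair (y*_S, x̄_S) ∈ C⊖ × (S ∩ g⁻¹(C)) which is a saddle point of L: L(y*, x̄_S) ≤ L(y*_S, x̄_S) ≤ L(y*_S, x) for all y* ∈ C⊖ and all x ∈ S. -/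
open Metric Set
open scoped NNReal ENNReal

lemma aux_ball_s7 {X : Type*} [NormedAddCommGroup X] [NormedSpace ℝ X] {c : ℝ} (hc : 0 < c)
    {S : Set X} (hS : UniformlyConvexWith c S) (hb : Bornology.IsBounded S)
    {x₁ x₂ : X} (h₁ : x₁ ∈ S) (h₂ : x₂ ∈ S) {d : ℝ} (hd : d < c * ‖x₁ - x₂‖ ^ 2) :
    closedBall (midpoint ℝ x₁ x₂) d ⊆ S := by
  obtain ⟨-, -, hconv, hmod⟩ := hS
  rcases lt_or_ge d 0 with hd0 | hd0
  · rw [closedBall_eq_empty.2 hd0]; exact empty_subset _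
  have hne : 0 < ‖x₁ - x₂‖ := by
    rcases (norm_nonneg (x₁ - x₂)).eq_or_lt with h | h
    · rw [← h] at hd; simp at hd; linarith
    · exact h
  obtain ⟨t, ht0, ht1, ht⟩ : ∃ t : ℝ, 0 < t ∧ t < 1 ∧ d < c * (t * ‖x₁ - x₂‖) ^ 2 := by
    have h1 : Filter.Tendsto (fun t : ℝ => c * (t * ‖x₁ - x₂‖) ^ 2) (nhdsWithin 1 (Iio 1))
        (nhds (c * (1 * ‖x₁ - x₂‖) ^ 2)) := by
      apply Filter.Tendsto.mono_left _ nhdsWithin_le_nhds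
      exact Continuous.tendsto (by fun_prop) 1
    have h2 := h1.eventually (lt_mem_nhds (show d < c * (1 * ‖x₁ - x₂‖) ^ 2 by simpa using hd))
    have h3 : ∀ᶠ t : ℝ in nhdsWithin 1 (Iio 1), 0 < t :=
      nhdsWithin_le_nhds (lt_mem_nhds one_pos)
    have h4 : ∀ᶠ t : ℝ in nhdsWithin 1 (Iio 1), t < 1 := self_mem_nhdsWithin
    obtain ⟨t, a, b, e⟩ := (h2.and (h3.and h4)).exists
    exact ⟨t, b, e, a⟩
  have hm : midpoint ℝ x₁ x₂ ∈ S := hconv.midpoint_mem h₁ h₂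
  set m := midpoint ℝ x₁ x₂ with hmdef
  have k₁ : AffineMap.lineMap m x₁ t ∈ S := hconv.lineMap_mem hm h₁ ⟨ht0.le, ht1.le⟩
  have k₂ : AffineMap.lineMap m x₂ t ∈ S := hconv.lineMap_mem hm h₂ ⟨ht0.le, ht1.le⟩
  have hmid : midpoint ℝ (AffineMap.lineMap m x₁ t) (AffineMap.lineMap m x₂ t) = m := by
    simp only [hmdef, AffineMap.lineMap_apply_module, midpoint_eq_smul_add, invOf_eq_inv]
    module
  have hnorm : ‖AffineMap.lineMap m x₁ t - AffineMap.lineMap m x₂ t‖ = t * ‖x₁ - x₂‖ := by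
    have : (AffineMap.lineMap m x₁ t - AffineMap.lineMap m x₂ t : X) = t • (x₁ - x₂) := by
      simp only [AffineMap.lineMap_apply_module]
      module
    rw [this, norm_smul, Real.norm_of_nonneg ht0.le]
  have hdiam : t * ‖x₁ - x₂‖ < Metric.diam S := by
    have := Metric.dist_le_diam_of_mem hb h₁ h₂
    rw [dist_eq_norm] at this
    nlinarith
  have hlt := ht.trans_le (hmod _ (by positivity) hdiam)
  unfold setModulus at hlt
  have hnon : {δ : ℝ | 0 ≤ δ ∧ ∀ x₁' ∈ S, ∀ x₂' ∈ S, ‖x₁' - x₂'‖ = t * ‖x₁ - x₂‖ →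
    closedBall (midpoint ℝ x₁' x₂') δ ⊆ S}.Nonempty := by
    rw [nonempty_iff_ne_empty]
    intro h
    rw [h, Real.sSup_empty] at hlt
    linarith
  obtain ⟨δ, ⟨-, hδ⟩, hdδ⟩ := exists_lt_of_lt_csSup hnon hlt
  have := hδ _ k₁ _ k₂ hnorm
  rw [hmid] at this
  exact (closedBall_subset_closedBall hdδ.le).trans this

lemma aux_taylor_s7 {X Z : Type*} [NormedAddCommGroup X] [NormedSpace ℝ X]
    [NormedAddCommGroup Z] [NormedSpace ℝ Z] {F : X → Z} {x₀ : X} {r₀ L : ℝ}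
    (hd : ∀ x ∈ ball x₀ r₀, DifferentiableAt ℝ F x)
    (hL : ∀ x₁ ∈ ball x₀ r₀, ∀ x₂ ∈ ball x₀ r₀,
      dist (fderiv ℝ F x₁) (fderiv ℝ F x₂) ≤ L * dist x₁ x₂)
    {x₁ x₂ : X} (h₁ : x₁ ∈ ball x₀ r₀) (h₂ : x₂ ∈ ball x₀ r₀) :
    ‖midpoint ℝ (F x₁) (F x₂) - F (midpoint ℝ x₁ x₂)‖ ≤ L / 8 * ‖x₁ - x₂‖ ^ 2 := by
  set m := midpoint ℝ x₁ x₂ with hmdef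
  set v : X := (1 / 2 : ℝ) • (x₁ - x₂) with hv
  have e₁ : ∀ t : ℝ, m + t • v = AffineMap.lineMap m x₁ t := fun t => by
    simp only [hmdef, hv, AffineMap.lineMap_apply_module, midpoint_eq_smul_add, invOf_eq_inv]
    module
  have e₂ : ∀ t : ℝ, m - t • v = AffineMap.lineMap m x₂ t := fun t => by
    simp only [hmdef, hv, AffineMap.lineMap_apply_module, midpoint_eq_smul_add, invOf_eq_inv]
    module
  have hcb := convex_ball x₀ r₀
  have hm : m ∈ ball x₀ r₀ := hcb.midpoint_mem h₁ h₂
  have b₁ : ∀ t ∈ Icc (0 : ℝ) 1, m + t • v ∈ ball x₀ r₀ := fun t ht => by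
    rw [e₁]; exact hcb.lineMap_mem hm h₁ ht
  have b₂ : ∀ t ∈ Icc (0 : ℝ) 1, m - t • v ∈ ball x₀ r₀ := fun t ht => by
    rw [e₂]; exact hcb.lineMap_mem hm h₂ ht
  have hder : ∀ t ∈ Icc (0 : ℝ) 1, HasDerivAt (fun t : ℝ => F (m + t • v) + F (m - t • v)
      - (2 : ℝ) • F m) (fderiv ℝ F (m + t • v) v - fderiv ℝ F (m - t • v) v) t := by
    intro t ht
    have d₁ : HasDerivAt (fun t : ℝ => m + t • v) v t := by
      simpa using ((hasDerivAt_id t).smul_const v).const_add m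
    have d₂ : HasDerivAt (fun t : ℝ => m - t • v) (-v) t := by
      simpa using ((hasDerivAt_id t).smul_const v).const_sub m
    have f₁ := (hd _ (b₁ t ht)).hasFDerivAt.comp_hasDerivAt t d₁
    have f₂ := (hd _ (b₂ t ht)).hasFDerivAt.comp_hasDerivAt t d₂
    have := (f₁.add f₂).sub_const ((2 : ℝ) • F m)
    rw [map_neg, ← sub_eq_add_neg] at this
    exact this
  have key := image_norm_le_of_norm_deriv_right_le_deriv_boundary
    (f := fun t : ℝ => F (m + t • v) + F (m - t • v) - (2 : ℝ) • F m) (a := 0) (b := 1)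
    (f' := fun t => fderiv ℝ F (m + t • v) v - fderiv ℝ F (m - t • v) v)
    (B := fun t => L * ‖v‖ ^ 2 * t ^ 2) (B' := fun t => L * ‖v‖ ^ 2 * (2 * t))
    (fun t ht => (hder t ht).continuousAt.continuousWithinAt)
    (fun t ht => (hder t (Ico_subset_Icc_self ht)).hasDerivWithinAt)
    (by simp [two_smul]) (fun t => by simpa using (hasDerivAt_pow 2 t).const_mul (L * ‖v‖ ^ 2))
    (fun t ht => by
      have ht' := Ico_subset_Icc_self ht
      have h := hL _ (b₁ t ht') _ (b₂ t ht')
      have e3 : dist (m + t • v) (m - t • v) = 2 * t * ‖v‖ := by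
        rw [dist_eq_norm, show m + t • v - (m - t • v) = (2 * t) • v by module, norm_smul,
          Real.norm_of_nonneg (by linarith [ht.1])]
      rw [e3, dist_eq_norm] at h
      calc ‖fderiv ℝ F (m + t • v) v - fderiv ℝ F (m - t • v) v‖
          = ‖(fderiv ℝ F (m + t • v) - fderiv ℝ F (m - t • v)) v‖ := by simp
        _ ≤ ‖fderiv ℝ F (m + t • v) - fderiv ℝ F (m - t • v)‖ * ‖v‖ :=
          ContinuousLinearMap.le_opNorm _ _
        _ ≤ L * (2 * t * ‖v‖) * ‖v‖ := by gcongr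
        _ = _ := by ring) (right_mem_Icc.2 zero_le_one)
  simp only [e₁, e₂, AffineMap.lineMap_apply_one] at key
  have e4 : midpoint ℝ (F x₁) (F x₂) - F m = (1 / 2 : ℝ) • (F x₁ + F x₂ - (2 : ℝ) • F m) := by
    simp only [midpoint_eq_smul_add, invOf_eq_inv]
    module
  have e5 : ‖v‖ = 1 / 2 * ‖x₁ - x₂‖ := by
    rw [hv, norm_smul]; norm_num
  rw [e4, norm_smul, Real.norm_of_nonneg (by norm_num)]
  rw [e5] at key
  nlinarith [key]

lemma aux_convex_s7 {Z : Type*} [NormedAddCommGroup Z] [NormedSpace ℝ Z] {K : Set Z}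
    (hcl : IsClosed K) (hmid : ∀ y₁ ∈ K, ∀ y₂ ∈ K, midpoint ℝ y₁ y₂ ∈ K) : Convex ℝ K := by
  rw [convex_iff_segment_subset]
  intro x hx y hy z hz
  rw [segment_eq_image_lineMap] at hz
  obtain ⟨t, ht, rfl⟩ := hz
  by_contra hcon
  set T : Set ℝ := (AffineMap.lineMap x y : ℝ → Z) ⁻¹' K with hT
  have hTc : IsClosed T := hcl.preimage (by fun_prop)
  have hA : IsCompact (T ∩ Icc 0 t) := isCompact_Icc.inter_left hTc
  have hB : IsCompact (T ∩ Icc t 1) := isCompact_Icc.inter_left hTc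
  obtain ⟨⟨a1, a2, a3⟩, a4⟩ := hA.isGreatest_sSup ⟨0, by simp [hT, hx], by simp [ht.1]⟩
  obtain ⟨⟨b1, b2, b3⟩, b4⟩ := hB.isLeast_sInf ⟨1, by simp [hT, hy], by simp [ht.2]⟩
  set a := sSup (T ∩ Icc 0 t)
  set b := sInf (T ∩ Icc t 1)
  have hat : a ≠ t := fun h => hcon (by rw [← h]; exact a1)
  have hbt : b ≠ t := fun h => hcon (by rw [← h]; exact b1)
  have hat' := lt_of_le_of_ne a3 hat
  have hbt' := lt_of_le_of_ne b2 hbt.symm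
  have hm : (a + b) / 2 ∈ T := by
    have := hmid _ a1 _ b1
    rw [hT, mem_preimage]
    convert this using 1
    simp only [AffineMap.lineMap_apply_module, midpoint_eq_smul_add, invOf_eq_inv]
    module
  rcases le_total ((a + b) / 2) t with h | h
  · have := a4 ⟨hm, by linarith, h⟩
    linarith
  · have := b4 ⟨hm, h, by linarith⟩
    linarith

lemma aux_open {X Z : Type*} [NormedAddCommGroup X] [NormedSpace ℝ X] [CompleteSpace X]
    [NormedAddCommGroup Z] [NormedSpace ℝ Z] [CompleteSpace Z] {F : X → Z} {x₀ : X}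
    {F' : X →L[ℝ] Z} (hs : HasStrictFDerivAt F F' x₀) (hsurj : Function.Surjective F') :
    ∃ κ : ℝ, 0 ≤ κ ∧ ∃ δ > 0, ∀ x ∈ closedBall x₀ δ, ∀ y ∈ closedBall (F x₀) δ,
      ∃ x', F x' = y ∧ dist x x' ≤ κ * ‖y - F x‖ := by
  obtain ⟨R, hR⟩ := F'.exists_nonlinearRightInverse_of_surjective (LinearMap.range_eq_top.2 hsurj)
  obtain ⟨q, hq0, hq⟩ : ∃ q : ℝ≥0, 0 < q ∧ q < R.nnnorm⁻¹ := exists_between (inv_pos.2 hR)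
  obtain ⟨s, hsn, happ⟩ := hs.approximates_deriv_on_nhds (c := q) (Or.inr hq0)
  obtain ⟨η, hη, hηs⟩ := Metric.nhds_basis_closedBall.mem_iff.1 hsn
  set a : ℝ := (R.nnnorm : ℝ)⁻¹ - q with ha
  have ha0 : 0 < a := by
    rw [ha, sub_pos]; exact_mod_cast hq
  have hcont := hs.continuousAt
  obtain ⟨θ, hθ, hθs⟩ := Metric.nhds_basis_closedBall.mem_iff.1
    (hcont.preimage_mem_nhds (closedBall_mem_nhds (F x₀) (show 0 < a * (η / 2) / 2 by positivity)))
  refine ⟨a⁻¹, by positivity, min (η / 2) (min θ (a * (η / 2) / 2)), by positivity, ?_⟩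
  intro x hx y hy
  rw [mem_closedBall] at hx hy
  have hx1 := hx.trans (min_le_left _ _)
  have hx2 := hx.trans ((min_le_right _ _).trans (min_le_left _ _))
  have hy1 := hy.trans ((min_le_right _ _).trans (min_le_right _ _))
  have hx3 : dist (F x) (F x₀) ≤ a * (η / 2) / 2 := hθs (mem_closedBall.2 hx2)
  have hyx : ‖y - F x‖ ≤ a * (η / 2) := by
    rw [← dist_eq_norm]
    linarith [dist_triangle_right y (F x) (F x₀)]
  have he : a⁻¹ * ‖y - F x‖ ≤ η / 2 := by
    rw [inv_mul_le_iff₀ ha0]; exact hyx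
  obtain ⟨x', hx', hFx'⟩ := happ.surjOn_closedBall_of_nonlinearRightInverse R
    (ε := a⁻¹ * ‖y - F x‖) (b := x) (by positivity)
    (fun z hz => hηs (by
      rw [mem_closedBall] at hz ⊢
      linarith [dist_triangle z x x₀]))
    (show y ∈ _ by
      rw [mem_closedBall, ← ha, dist_eq_norm, mul_inv_cancel_left₀ ha0.ne'])
  exact ⟨x', hFx', by rw [dist_comm]; exact hx'⟩

lemma aux_reg {X Z : Type*} [NormedAddCommGroup X] [NormedSpace ℝ X] [CompleteSpace X]
    [NormedAddCommGroup Z] [NormedSpace ℝ Z] [CompleteSpace Z] {F : X → Z} {x₀ : X}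
    {F' : X →L[ℝ] Z} (hs : HasStrictFDerivAt F F' x₀) (hsurj : Function.Surjective F')
    {L c : ℝ} (hL : 0 ≤ L) (hc : 0 < c)
    (hreg : regBound F x₀ * ENNReal.ofReal L / 8 < ENNReal.ofReal c) :
    ∃ κ : ℝ, 0 ≤ κ ∧ κ * L / 8 < c ∧ ∃ δ > 0, ∀ x ∈ closedBall x₀ δ, ∀ y ∈ closedBall (F x₀) δ,
      ∀ r, κ * ‖y - F x‖ < r → ∃ x', F x' = y ∧ dist x x' < r := by
  obtain ⟨κ₀, hκ₀, δ₀, hδ₀, h₀⟩ := aux_open hs hsurj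
  rcases hL.eq_or_lt with h | hLpos
  · refine ⟨κ₀, hκ₀, by rw [← h]; simpa using hc, δ₀, hδ₀, fun x hx y hy r hr => ?_⟩
    obtain ⟨x', e, hx'⟩ := h₀ x hx y hy
    exact ⟨x', e, hx'.trans_lt hr⟩
  · have hlt : regBound F x₀ < ENNReal.ofReal (8 * c / L) := by
      by_contra hcon
      rw [not_lt] at hcon
      refine absurd hreg (not_lt.2 ?_)
      calc ENNReal.ofReal c = ENNReal.ofReal (8 * c / L) * ENNReal.ofReal L / 8 := by
            rw [← ENNReal.ofReal_mul (by positivity), div_mul_cancel₀ _ hLpos.ne',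
              ENNReal.ofReal_mul (by norm_num), ENNReal.ofReal_ofNat, mul_comm,
              ENNReal.mul_div_cancel_right (by norm_num) (by norm_num)]
        _ ≤ _ := by gcongr
    unfold regBound at hlt
    obtain ⟨_, ⟨κ, ⟨hκ, δ, hδ, hh⟩, rfl⟩, hκlt⟩ := sInf_lt_iff.1 hlt
    have hκ' : κ < 8 * c / L := (ENNReal.ofReal_lt_ofReal_iff (by positivity)).1 hκlt
    refine ⟨κ, hκ, ?_, min δ δ₀, lt_min hδ hδ₀, fun x hx y hy r hr => ?_⟩
    · rw [lt_div_iff₀ hLpos] at hκ'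
      linarith
    · have hne : {x' | F x' = y}.Nonempty := by
        obtain ⟨x', e, -⟩ := h₀ x (closedBall_subset_closedBall (min_le_right _ _) hx) y
          (closedBall_subset_closedBall (min_le_right _ _) hy)
        exact ⟨x', e⟩
      have := (hh x (closedBall_subset_closedBall (min_le_left _ _) hx) y
          (closedBall_subset_closedBall (min_le_left _ _) hy)).trans_lt hr
      obtain ⟨x', e, h'⟩ := (Metric.infDist_lt_iff hne).1 this
      exact ⟨x', e, h'⟩

lemma aux_core {X Z : Type*} [NormedAddCommGroup X] [NormedSpace ℝ X] [CompleteSpace X]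
    [NormedAddCommGroup Z] [NormedSpace ℝ Z] [CompleteSpace Z] {F : X → Z} {x₀ : X}
    {F' : X →L[ℝ] Z} (hs : HasStrictFDerivAt F F' x₀) (hsurj : Function.Surjective F')
    {L c r₀ : ℝ} (hL : 0 ≤ L) (hc : 0 < c) (hr₀ : 0 < r₀)
    (hd : ∀ x ∈ ball x₀ r₀, DifferentiableAt ℝ F x)
    (hLip : ∀ x₁ ∈ ball x₀ r₀, ∀ x₂ ∈ ball x₀ r₀,
      dist (fderiv ℝ F x₁) (fderiv ℝ F x₂) ≤ L * dist x₁ x₂)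
    (hreg : regBound F x₀ * ENNReal.ofReal L / 8 < ENNReal.ofReal c) :
    ∃ ρ : ℝ, 0 < ρ ∧ ρ < r₀ ∧ ∃ σ > 0, ∀ S : Set X, UniformlyConvexWith c S →
      S ⊆ closedBall x₀ ρ → Bornology.IsBounded (F '' S) ∧
      ∀ y₁ ∈ F '' S, ∀ y₂ ∈ F '' S,
        closedBall (midpoint ℝ y₁ y₂) (σ * ‖y₁ - y₂‖ ^ 2) ⊆ F '' S := by
  obtain ⟨κ, hκ, hκc, δ, hδ, hP⟩ := aux_reg hs hsurj hL hc hreg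
  obtain ⟨K₀, U, hU, hK₀⟩ := hs.exists_lipschitzOnWith
  obtain ⟨η, hη, hηU⟩ := Metric.nhds_basis_closedBall.mem_iff.1 hU
  set K : ℝ := K₀ + 1 with hK
  have hKpos : 0 < K := by positivity
  set s : ℝ := (c - κ * L / 8) / (2 * (κ + 1)) with hsdef
  have hspos : 0 < s := div_pos (by linarith) (by positivity)
  have hsc : κ * (L / 8 + s) < c := by
    have : s * (2 * (κ + 1)) = c - κ * L / 8 := div_mul_cancel₀ _ (by positivity)
    nlinarith
  set ρ := min (min η 1) (min (min δ (r₀ / 2)) (δ / (K + 4 * s))) with hρ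
  have hρ0 : 0 < ρ := by positivity
  have hρη : ρ ≤ η := (min_le_left _ _).trans (min_le_left _ _)
  have hρ1 : ρ ≤ 1 := (min_le_left _ _).trans (min_le_right _ _)
  have hρδ : ρ ≤ δ := (min_le_right _ _).trans ((min_le_left _ _).trans (min_le_left _ _))
  have hρr : ρ ≤ r₀ / 2 := (min_le_right _ _).trans ((min_le_left _ _).trans (min_le_right _ _))
  have hρK : (K + 4 * s) * ρ ≤ δ := by
    have : ρ ≤ δ / (K + 4 * s) := (min_le_right _ _).trans (min_le_right _ _)
    rwa [le_div_iff₀ (by positivity), mul_comm] at this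
  have hLipK : ∀ x ∈ closedBall x₀ ρ, ∀ x' ∈ closedBall x₀ ρ, ‖F x - F x'‖ ≤ K * ‖x - x'‖ := by
    intro x hx x' hx'
    have := hK₀.dist_le_mul x (hηU (closedBall_subset_closedBall hρη hx)) x'
      (hηU (closedBall_subset_closedBall hρη hx'))
    rw [dist_eq_norm, dist_eq_norm] at this
    nlinarith [norm_nonneg (x - x')]
  have hx₀ : x₀ ∈ closedBall x₀ ρ := mem_closedBall_self hρ0.le
  have hFb : ∀ x ∈ closedBall x₀ ρ, F x ∈ closedBall (F x₀) (K * ρ) := by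
    intro x hx
    rw [mem_closedBall, dist_eq_norm]
    refine (hLipK x hx x₀ hx₀).trans ?_
    rw [mem_closedBall, dist_eq_norm] at hx
    gcongr
  have hbr : closedBall x₀ ρ ⊆ ball x₀ r₀ := closedBall_subset_ball (by linarith)
  refine ⟨ρ, hρ0, by linarith, s / K ^ 2, by positivity, fun S hS hSρ => ⟨?_, ?_⟩⟩
  · refine (Metric.isBounded_closedBall (x := F x₀) (r := K * ρ)).subset ?_
    rintro _ ⟨x, hx, rfl⟩
    exact hFb x (hSρ hx)
  · rintro _ ⟨x₁, h₁, rfl⟩ _ ⟨x₂, h₂, rfl⟩ y hy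
    have hbS : Bornology.IsBounded S := Metric.isBounded_closedBall.subset hSρ
    have k₁ := hSρ h₁
    have k₂ := hSρ h₂
    rcases eq_or_ne x₁ x₂ with rfl | hne
    · simp at hy
      exact ⟨x₁, h₁, hy.symm⟩
    have hepos : 0 < ‖x₁ - x₂‖ := norm_pos_iff.2 (sub_ne_zero.2 hne)
    have hT := aux_taylor_s7 hd hLip (hbr k₁) (hbr k₂)
    have hy1 : ‖y - midpoint ℝ (F x₁) (F x₂)‖ ≤ s * ‖x₁ - x₂‖ ^ 2 := by
      rw [mem_closedBall, dist_eq_norm] at hy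
      refine hy.trans ?_
      have h := hLipK _ k₁ _ k₂
      calc s / K ^ 2 * ‖F x₁ - F x₂‖ ^ 2 ≤ s / K ^ 2 * (K * ‖x₁ - x₂‖) ^ 2 := by gcongr
        _ = _ := by field_simp
    have he2 : ‖x₁ - x₂‖ ≤ 2 * ρ := by
      rw [← dist_eq_norm]
      rw [mem_closedBall] at k₁ k₂
      linarith [dist_triangle_right x₁ x₂ x₀]
    have hyδ : y ∈ closedBall (F x₀) δ := by
      have hm : midpoint ℝ (F x₁) (F x₂) ∈ closedBall (F x₀) (K * ρ) :=
        (convex_closedBall _ _).midpoint_mem (hFb _ k₁) (hFb _ k₂)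
      rw [mem_closedBall] at hm ⊢
      rw [← dist_eq_norm] at hy1
      have h4 : s * ‖x₁ - x₂‖ ^ 2 ≤ 4 * s * ρ := by
        have : ‖x₁ - x₂‖ ^ 2 ≤ 4 * ρ := by nlinarith
        nlinarith
      linarith [dist_triangle y (midpoint ℝ (F x₁) (F x₂)) (F x₀)]
    have hmδ : midpoint ℝ x₁ x₂ ∈ closedBall x₀ δ :=
      closedBall_subset_closedBall hρδ ((convex_closedBall _ _).midpoint_mem k₁ k₂)
    have hyF : ‖y - F (midpoint ℝ x₁ x₂)‖ ≤ (L / 8 + s) * ‖x₁ - x₂‖ ^ 2 := by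
      have := norm_add_le (y - midpoint ℝ (F x₁) (F x₂))
        (midpoint ℝ (F x₁) (F x₂) - F (midpoint ℝ x₁ x₂))
      rw [sub_add_sub_cancel] at this
      linarith
    have hlt : κ * ‖y - F (midpoint ℝ x₁ x₂)‖ < c * ‖x₁ - x₂‖ ^ 2 :=
      calc _ ≤ κ * ((L / 8 + s) * ‖x₁ - x₂‖ ^ 2) := by gcongr
        _ = κ * (L / 8 + s) * ‖x₁ - x₂‖ ^ 2 := by ring
        _ < _ := by gcongr
    obtain ⟨x', hx', hdx⟩ := hP _ hmδ _ hyδ _ hlt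
    exact ⟨x', aux_ball_s7 hc hS hbS h₁ h₂ hdx (by rw [mem_closedBall, dist_comm]), hx'⟩

lemma aux_min_s7 {Y : Type*} [NormedAddCommGroup Y] [NormedSpace ℝ Y] [CompleteSpace Y]
    {K : Set (ℝ × Y)} (hcl : IsClosed K) (hbd : Bornology.IsBounded K) {σ : ℝ} (hσ : 0 < σ)
    (hball : ∀ y₁ ∈ K, ∀ y₂ ∈ K, closedBall (midpoint ℝ y₁ y₂) (σ * ‖y₁ - y₂‖ ^ 2) ⊆ K)
    {C : Set Y} (hC : IsClosed C) (hCc : Convex ℝ C) (hne : ∃ p ∈ K, p.2 ∈ C) :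
    ∃ p ∈ K, p.2 ∈ C ∧ ∀ q ∈ K, q.2 ∈ C → p.1 ≤ q.1 := by
  set A : Set (ℝ × Y) := K ∩ Prod.snd ⁻¹' C with hA
  have hAcl : IsClosed A := hcl.inter (hC.preimage continuous_snd)
  have hAne : A.Nonempty := by
    obtain ⟨p, h1, h2⟩ := hne
    exact ⟨p, h1, h2⟩
  obtain ⟨R, hR⟩ := hbd.exists_norm_le
  have hbb : BddBelow (Prod.fst '' A) := by
    refine ⟨-R, ?_⟩
    rintro _ ⟨p, hp, rfl⟩
    have h1 := (norm_fst_le p).trans (hR p hp.1)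
    exact (abs_le.1 h1).1
  set m := sInf (Prod.fst '' A) with hm
  have hmle : ∀ q ∈ A, m ≤ q.1 := fun q hq => csInf_le hbb ⟨q, hq, rfl⟩
  have hseq : ∀ n : ℕ, ∃ p ∈ A, p.1 < m + 1 / ((n : ℝ) + 1) := by
    intro n
    obtain ⟨_, ⟨p, hp, rfl⟩, hlt⟩ := exists_lt_of_csInf_lt (hAne.image Prod.fst)
      (show sInf (Prod.fst '' A) < m + 1 / ((n : ℝ) + 1) by
        have : (0 : ℝ) < 1 / ((n : ℝ) + 1) := by positivity
        linarith)
    exact ⟨p, hp, hlt⟩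
  choose u hu hult using hseq
  have hest : ∀ ε : ℝ, ∀ p ∈ A, ∀ q ∈ A, p.1 < m + ε → q.1 < m + ε → σ * ‖p - q‖ ^ 2 < ε := by
    intro ε p hp q hq h1 h2
    set w : ℝ × Y := midpoint ℝ p q - (σ * ‖p - q‖ ^ 2, 0) with hw
    have hwK : w ∈ K := by
      apply hball p hp.1 q hq.1
      rw [mem_closedBall, dist_eq_norm, hw, sub_sub_cancel_left, norm_neg, Prod.norm_mk]
      simp [abs_of_pos hσ]
      positivity
    have hw2 : w.2 = midpoint ℝ p.2 q.2 := by
      simp [hw, midpoint_eq_smul_add]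
    have hw1 : w.1 = (p.1 + q.1) / 2 - σ * ‖p - q‖ ^ 2 := by
      simp [hw, midpoint_eq_smul_add]
      ring
    have := hmle w ⟨hwK, by rw [mem_preimage, hw2]; exact hCc.midpoint_mem hp.2 hq.2⟩
    linarith
  have hcau : CauchySeq u := by
    rw [Metric.cauchySeq_iff']
    intro ε hε
    obtain ⟨N, hN⟩ := exists_nat_one_div_lt (show 0 < σ * ε ^ 2 by positivity)
    refine ⟨N, fun n hn => ?_⟩
    have h1 : 1 / ((n : ℝ) + 1) ≤ 1 / ((N : ℝ) + 1) := by gcongr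
    have h2 := (hest _ _ (hu n) _ (hu N) ((hult n).trans_le (by linarith)) (hult N)).trans hN
    rw [dist_eq_norm]
    exact lt_of_pow_lt_pow_left₀ 2 hε.le (lt_of_mul_lt_mul_left h2 hσ.le)
  obtain ⟨p, hp⟩ := cauchySeq_tendsto_of_complete hcau
  have hpA : p ∈ A := hAcl.mem_of_tendsto hp (Filter.Eventually.of_forall hu)
  refine ⟨p, hpA.1, hpA.2, fun q hq hq2 => ?_⟩
  refine le_trans ?_ (hmle q ⟨hq, hq2⟩)
  have l1 : Filter.Tendsto (fun n => (u n).1) Filter.atTop (nhds p.1) :=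
    (continuous_fst.tendsto p).comp hp
  have l2 : Filter.Tendsto (fun n : ℕ => m + 1 / ((n : ℝ) + 1)) Filter.atTop (nhds (m + 0)) :=
    tendsto_one_div_add_atTop_nhds_zero_nat.const_add m
  rw [add_zero] at l2
  exact le_of_tendsto_of_tendsto' l1 l2 fun n => (hult n).le

lemma aux_mult_s7 {Y : Type*} [NormedAddCommGroup Y] [NormedSpace ℝ Y]
    {K : Set (ℝ × Y)} (hK : Convex ℝ K)
    {C : Set Y} (hCconv : Convex ℝ C) (hC0 : (0 : Y) ∈ C)
    (hCcone : ∀ t : ℝ, 0 ≤ t → ∀ y ∈ C, t • y ∈ C)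
    {p₀ : ℝ × Y} (hp₀ : p₀ ∈ interior K) (hp₀C : p₀.2 ∈ C)
    {m : ℝ} (hm : ∀ q ∈ K, q.2 ∈ C → m ≤ q.1) :
    ∃ ys : Y →L[ℝ] ℝ, (∀ z ∈ C, ys z ≤ 0) ∧ ∀ q ∈ K, m ≤ q.1 + ys q.2 := by
  have hdisj : Disjoint (interior K) (Iio m ×ˢ C) := by
    rw [Set.disjoint_left]
    rintro q hq ⟨h1, h2⟩
    exact absurd (hm q (interior_subset hq) h2) (not_le.2 h1)
  obtain ⟨f, u, hf1, hf2⟩ := geometric_hahn_banach_open hK.interior isOpen_interior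
    ((convex_Iio m).prod hCconv) hdisj
  have hfK : ∀ q ∈ K, f q ≤ u := by
    intro q hq
    have h1 : q ∈ closure (interior K) := by
      rw [hK.closure_interior_eq_closure_of_nonempty_interior ⟨p₀, hp₀⟩]
      exact subset_closure hq
    exact closure_minimal (fun a ha => (hf1 a ha).le)
      (isClosed_le f.continuous continuous_const) h1
  set α : ℝ := f (1, 0) with hα
  set ψ : Y →L[ℝ] ℝ := f.comp (ContinuousLinearMap.inr ℝ ℝ Y) with hψ
  have hdec : ∀ t : ℝ, ∀ y : Y, f (t, y) = α * t + ψ y := by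
    intro t y
    have : ((t, y) : ℝ × Y) = t • ((1 : ℝ), (0 : Y)) + (0, y) := by simp
    rw [this, map_add, map_smul, hα, hψ]
    simp [mul_comm]
  have hB : ∀ t < m, ∀ z ∈ C, u ≤ α * t + ψ z := fun t ht z hz => by
    rw [← hdec]; exact hf2 _ ⟨ht, hz⟩
  have hp₀u : α * p₀.1 + ψ p₀.2 < u := by rw [← hdec]; exact hf1 _ hp₀
  have hαneg : α < 0 := by
    by_contra hcon
    rw [not_lt] at hcon
    have h1 := hB (min (m - 1) p₀.1) (by linarith [min_le_left (m - 1) p₀.1]) _ hp₀C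
    have h2 : α * min (m - 1) p₀.1 ≤ α * p₀.1 := by
      gcongr; exact min_le_right _ _
    linarith
  have hψC : ∀ z ∈ C, 0 ≤ ψ z := by
    intro z hz
    by_contra hcon
    rw [not_le] at hcon
    set T : ℝ := (|u - α * (m - 1)| + 1) / (-ψ z) with hT
    have hT0 : 0 ≤ T := by
      apply div_nonneg (by positivity); linarith
    have h1 := hB (m - 1) (by linarith) _ (hCcone T hT0 z hz)
    rw [map_smul, smul_eq_mul] at h1
    have h2 : T * -ψ z = |u - α * (m - 1)| + 1 := div_mul_cancel₀ _ (by linarith)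
    linarith [neg_abs_le (u - α * (m - 1))]
  have hum : u ≤ α * m := by
    by_contra hcon
    rw [not_le] at hcon
    have h1 := hB (m - (u - α * m) / (2 * (-α)))
      (by have : 0 < (u - α * m) / (2 * (-α)) := div_pos (by linarith) (by linarith)
          linarith) 0 hC0
    rw [map_zero] at h1
    have h2 : (u - α * m) / (2 * (-α)) * (2 * (-α)) = u - α * m :=
      div_mul_cancel₀ _ (by linarith)
    nlinarith
  refine ⟨α⁻¹ • ψ, fun z hz => ?_, fun q hq => ?_⟩
  · have := mul_nonpos_of_nonpos_of_nonneg (inv_nonpos.2 hαneg.le) (hψC z hz)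
    simpa using this
  · have h1 := hfK q hq
    rw [show q = (q.1, q.2) from rfl, hdec] at h1
    have h2 : α * (q.1 + (α⁻¹ • ψ) q.2) = α * q.1 + ψ q.2 := by
      have hα0 := hαneg.ne
      rw [show (α⁻¹ • ψ) q.2 = α⁻¹ * ψ q.2 from rfl, mul_add, mul_inv_cancel_left₀ hα0]
    have h3 : α * (q.1 + (α⁻¹ • ψ) q.2) ≤ α * m := by linarith
    exact (mul_le_mul_left_of_neg hαneg).1 h3

set_option maxHeartbeats 2000000 in
/-- Corollary 4.4 of the paper: zero Lagrangian duality gap and existence of a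
saddle point of the Lagrangian, when `C` is a closed convex cone. -/
theorem zero_duality_gap_and_saddle_point
    {X Y : Type*} [NormedAddCommGroup X] [NormedSpace ℝ X] [CompleteSpace X]
    [NormedAddCommGroup Y] [NormedSpace ℝ Y] [CompleteSpace Y]
    -- Y is reflexive
    (hrefl : Function.Surjective (NormedSpace.inclusionInDoubleDual ℝ Y))
    (φ : X → ℝ) (g : X → Y)
    -- C is a closed convex cone with apex at the origin
    (C : Set Y) (hCcl : IsClosed C) (hCconv : Convex ℝ C) (hC0 : (0 : Y) ∈ C)
    (hCcone : ∀ t : ℝ, 0 ≤ t → ∀ y ∈ C, t • y ∈ C)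
    (x₀ : X) (hx₀ : g x₀ ∈ C) (c : ℝ) (hc : 0 < c) (r₀ : ℝ) (hr₀ : 0 < r₀)
    (F : X → ℝ × Y) (hF : F = fun x => (φ x - φ x₀, g x))
    (hφdiff : ∀ x ∈ ball x₀ r₀, DifferentiableAt ℝ φ x)
    (hgdiff : ∀ x ∈ ball x₀ r₀, DifferentiableAt ℝ g x)
    (hφlip : ∃ K : ℝ≥0, LipschitzOnWith K (fderiv ℝ φ) (ball x₀ r₀))
    (hglip : ∃ K : ℝ≥0, LipschitzOnWith K (fderiv ℝ g) (ball x₀ r₀))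
    (hsurj : Function.Surjective (fderiv ℝ F x₀))
    (hreg : regBound F x₀ * ENNReal.ofReal (lipOn (fderiv ℝ F) (ball x₀ r₀)) / 8
      < ENNReal.ofReal c) :
    ∃ ρ : ℝ, 0 < ρ ∧ ρ < r₀ ∧ ∀ S : Set X, UniformlyConvexWith c S →
      x₀ ∈ interior S → S ⊆ closedBall x₀ ρ → IsClosed (F '' S) →
      -- the duality gap vanishes: inf sup L = sup inf L over S × C⊖
      ((⨅ x : S, ⨆ ys : {y : Y →L[ℝ] ℝ // ∀ z ∈ C, y z ≤ 0},
          ((φ x.1 + ys.1 (g x.1) : ℝ) : EReal)) =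
        ⨆ ys : {y : Y →L[ℝ] ℝ // ∀ z ∈ C, y z ≤ 0},
          ⨅ x : S, ((φ x.1 + ys.1 (g x.1) : ℝ) : EReal)) ∧
      -- existence of a saddle point (y*_S, x̄_S) ∈ C⊖ × R of the Lagrangian
      ∃ ystar : Y →L[ℝ] ℝ, (∀ z ∈ C, ystar z ≤ 0) ∧
        ∃ xbar ∈ S ∩ g ⁻¹' C,
          (∀ y' : Y →L[ℝ] ℝ, (∀ z ∈ C, y' z ≤ 0) →
            φ xbar + y' (g xbar) ≤ φ xbar + ystar (g xbar)) ∧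
          (∀ x ∈ S, φ xbar + ystar (g xbar) ≤ φ x + ystar (g x)) := by
  have hball0 : ball x₀ r₀ ∈ nhds x₀ := ball_mem_nhds _ hr₀
  have hFd : ∀ x ∈ ball x₀ r₀, HasFDerivAt F ((fderiv ℝ φ x).prod (fderiv ℝ g x)) x := by
    intro x hx
    rw [hF]
    exact ((hφdiff x hx).hasFDerivAt.sub_const (φ x₀)).prodMk (hgdiff x hx).hasFDerivAt
  have hFdiff : ∀ x ∈ ball x₀ r₀, DifferentiableAt ℝ F x :=
    fun x hx => (hFd x hx).differentiableAt
  obtain ⟨K₁, hK₁⟩ := hφlip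
  obtain ⟨K₂, hK₂⟩ := hglip
  have hmem : (max K₁ K₂ : ℝ) ∈ {ℓ : ℝ | 0 ≤ ℓ ∧ ∀ x₁ ∈ ball x₀ r₀, ∀ x₂ ∈ ball x₀ r₀,
      dist (fderiv ℝ F x₁) (fderiv ℝ F x₂) ≤ ℓ * dist x₁ x₂} := by
    refine ⟨le_max_of_le_left K₁.2, fun x₁ h₁ x₂ h₂ => ?_⟩
    have a₁ := hK₁.dist_le_mul x₁ h₁ x₂ h₂
    have a₂ := hK₂.dist_le_mul x₁ h₁ x₂ h₂
    rw [(hFd x₁ h₁).fderiv, (hFd x₂ h₂).fderiv, dist_eq_norm]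
    rw [dist_eq_norm] at a₁ a₂
    refine ContinuousLinearMap.opNorm_le_bound _
      (mul_nonneg (le_max_of_le_left K₁.2) dist_nonneg) fun v => ?_
    rw [Prod.norm_def]
    refine max_le ?_ ?_
    · refine (ContinuousLinearMap.le_opNorm (fderiv ℝ φ x₁ - fderiv ℝ φ x₂) v).trans ?_
      gcongr
      refine a₁.trans ?_
      gcongr
      exact le_max_left _ _
    · refine (ContinuousLinearMap.le_opNorm (fderiv ℝ g x₁ - fderiv ℝ g x₂) v).trans ?_
      gcongr
      refine a₂.trans ?_
      gcongr
      exact le_max_right _ _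
  set L := lipOn (fderiv ℝ F) (ball x₀ r₀) with hLdef
  have hL0 : 0 ≤ L := Real.sInf_nonneg fun ℓ hℓ => hℓ.1
  have hLip : ∀ x₁ ∈ ball x₀ r₀, ∀ x₂ ∈ ball x₀ r₀,
      dist (fderiv ℝ F x₁) (fderiv ℝ F x₂) ≤ L * dist x₁ x₂ := by
    intro x₁ h₁ x₂ h₂
    rcases (dist_nonneg (x := x₁) (y := x₂)).eq_or_lt with h | h
    · rw [dist_eq_zero.1 h.symm]; simp
    · rw [← div_le_iff₀ h]
      refine le_csInf ⟨_, hmem⟩ fun ℓ hℓ => ?_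
      rw [div_le_iff₀ h]
      exact hℓ.2 x₁ h₁ x₂ h₂
  have hcontF : ContinuousAt (fderiv ℝ F) x₀ := by
    have : LipschitzOnWith (max K₁ K₂) (fderiv ℝ F) (ball x₀ r₀) :=
      LipschitzOnWith.of_dist_le_mul fun x₁ h₁ x₂ h₂ => by
        have := hmem.2 x₁ h₁ x₂ h₂
        simpa using this
    exact this.continuousOn.continuousAt hball0
  have hstrict : HasStrictFDerivAt F (fderiv ℝ F x₀) x₀ :=
    hasStrictFDerivAt_of_hasFDerivAt_of_continuousAt
      (Filter.mem_of_superset hball0 fun x hx => (hFdiff x hx).hasFDerivAt) hcontF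
  obtain ⟨ρ, hρ0, hρr, σ, hσ, hcore⟩ :=
    aux_core hstrict hsurj hL0 hc hr₀ hFdiff hLip hreg
  refine ⟨ρ, hρ0, hρr, fun S hS hx₀S hSρ hcl => ?_⟩
  obtain ⟨hbd, hballs⟩ := hcore S hS hSρ
  have hFx : ∀ x, F x = (φ x - φ x₀, g x) := fun x => by rw [hF]
  have hconv : Convex ℝ (F '' S) := aux_convex_s7 hcl fun y₁ h₁ y₂ h₂ =>
    hballs y₁ h₁ y₂ h₂ (mem_closedBall_self (by positivity))
  have hint : F x₀ ∈ interior (F '' S) := by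
    rw [mem_interior_iff_mem_nhds, ← hstrict.map_nhds_eq_of_surj (LinearMap.range_eq_top.2 hsurj)]
    exact Filter.image_mem_map (mem_interior_iff_mem_nhds.1 hx₀S)
  have hFx₀C : (F x₀).2 ∈ C := by rw [hFx]; exact hx₀
  obtain ⟨_, ⟨xbar, hxS, rfl⟩, hxC, hmin⟩ := aux_min_s7 hcl hbd hσ hballs hCcl hCconv
    ⟨F x₀, interior_subset hint, hFx₀C⟩
  obtain ⟨ys, hys, hsad⟩ := aux_mult_s7 hconv hCconv hC0 hCcone hint hFx₀C hmin
  have hgx : g xbar ∈ C := by rw [hFx] at hxC; exact hxC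
  have hsad' : ∀ x ∈ S, φ xbar ≤ φ x + ys (g x) := by
    intro x hx
    have := hsad _ ⟨x, hx, rfl⟩
    rw [hFx, hFx] at this
    simp only at this
    linarith
  have hzero : ys (g xbar) = 0 := le_antisymm (hys _ hgx) (by linarith [hsad' xbar hxS])
  have hs1 : ∀ y' : Y →L[ℝ] ℝ, (∀ z ∈ C, y' z ≤ 0) →
      φ xbar + y' (g xbar) ≤ φ xbar + ys (g xbar) := by
    intro y' hy'
    have := hy' _ hgx
    linarith
  have hs2 : ∀ x ∈ S, φ xbar + ys (g xbar) ≤ φ x + ys (g x) := by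
    intro x hx
    have := hsad' x hx
    linarith
  refine ⟨le_antisymm ?_ (iSup_iInf_le_iInf_iSup _), ys, hys, xbar, ⟨hxS, hgx⟩, hs1, hs2⟩
  refine le_trans (b := ((φ xbar + ys (g xbar) : ℝ) : EReal)) ?_ ?_
  · refine iInf_le_of_le (⟨xbar, hxS⟩ : S) (iSup_le ?_)
    rintro ⟨y', hy'⟩
    exact EReal.coe_le_coe_iff.2 (hs1 y' hy')
  · refine le_iSup_of_le ⟨ys, hys⟩ (le_iInf ?_)
    rintro ⟨x, hx⟩
    exact EReal.coe_le_coe_iff.2 (hs2 x hx)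
end

section
/- Let f : X → Y be a mapping between metric spaces, x₀ ∈ X, and suppose there exist positive reals δ and σ such that f(B(x, r)) ⊇ B(f(x), σr) for all x ∈ B(x₀, δ) and all r ∈ [0, δ]. Then for every set S ⊆ B(x₀, δ): (a) f(int S) ⊆ int f(S); and (b) consequently, if f is continuous, f⁻¹(y) ∩ S ⊆ fr S for every y ∈ fr f(S), where fr denotes the topological boundary. -/
open Metric Set

/-- Remark 2.6 (ii) of the paper: a mapping that is open at a linear rate (in the
simplified form valid around a continuity point) maps interiors into interiors
of images; consequently preimages of boundary points of the image meet `S` only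
at boundary points of `S`. -/
theorem openAtLinearRate_interior_image
    {X Y : Type*} [MetricSpace X] [MetricSpace Y] (f : X → Y) (x₀ : X)
    (δ σ : ℝ) (hδ : 0 < δ) (hσ : 0 < σ)
    (hop : ∀ x ∈ closedBall x₀ δ, ∀ r ∈ Icc (0 : ℝ) δ,
      closedBall (f x) (σ * r) ⊆ f '' closedBall x r)
    (S : Set X) (hS : S ⊆ closedBall x₀ δ) :
    f '' interior S ⊆ interior (f '' S) ∧
      (Continuous f →
        ∀ y ∈ frontier (f '' S), {x : X | f x = y} ∩ S ⊆ frontier S) := by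
  have key : f '' interior S ⊆ interior (f '' S) := by
    rintro _ ⟨x, hx, rfl⟩
    obtain ⟨ε, hε, hb⟩ := Metric.nhds_basis_closedBall.mem_iff.1 (mem_interior_iff_mem_nhds.1 hx)
    have hr : 0 < min ε δ := lt_min hε hδ
    rw [mem_interior_iff_mem_nhds]
    refine Filter.mem_of_superset (closedBall_mem_nhds (f x) (mul_pos hσ hr)) ?_
    refine (hop x (hS (interior_subset hx)) _ ⟨hr.le, min_le_right _ _⟩).trans ?_
    exact image_mono ((closedBall_subset_closedBall (min_le_left _ _)).trans hb)
  refine ⟨key, ?_⟩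
  rintro - y hy x ⟨hxy, hxS⟩
  refine ⟨subset_closure hxS, fun hx => hy.2 ?_⟩
  have hxy : f x = y := hxy
  exact hxy ▸ key ⟨x, hx, rfl⟩
end

section
/- Let X, Y be real Banach spaces, Ω ⊆ X open, and f : Ω → Y differentiable on Ω with Df Lipschitz continuous on Ω with exact Lipschitz bound lip(Df, Ω). Then for all x₁, x₂ ∈ Ω with the segment [x₁, x₂] ⊆ Ω, it holds ‖(f(x₁) + f(x₂))/2 − f((x₁ + x₂)/2)‖ ≤ (lip(Df, Ω)/8) · ‖x₁ − x₂‖². -/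
open Metric Set
open scoped NNReal ENNReal

/-- Remark 2.1 (i) of the paper: the second-order midpoint estimate for a
`C^{1,1}` mapping between Banach spaces. -/
theorem midpoint_estimate_C11
    {X Y : Type*} [NormedAddCommGroup X] [NormedSpace ℝ X] [CompleteSpace X]
    [NormedAddCommGroup Y] [NormedSpace ℝ Y] [CompleteSpace Y]
    (Ω : Set X) (hΩopen : IsOpen Ω) (f : X → Y)
    (hdiff : ∀ x ∈ Ω, DifferentiableAt ℝ f x)
    (hlip : ∃ K : ℝ≥0, LipschitzOnWith K (fderiv ℝ f) Ω)
    (x₁ x₂ : X) (hseg : segment ℝ x₁ x₂ ⊆ Ω) :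
    ‖midpoint ℝ (f x₁) (f x₂) - f (midpoint ℝ x₁ x₂)‖ ≤
      lipOn (fderiv ℝ f) Ω / 8 * ‖x₁ - x₂‖ ^ 2 := by
  obtain ⟨K, hK⟩ := hlip
  have hL : ∀ a ∈ Ω, ∀ b ∈ Ω, dist (fderiv ℝ f a) (fderiv ℝ f b) ≤
      lipOn (fderiv ℝ f) Ω * dist a b := by
    intro a ha b hb
    rcases eq_or_ne a b with rfl | hab
    · simp
    · have hd : 0 < dist a b := dist_pos.2 hab
      rw [← div_le_iff₀ hd]
      refine le_csInf ⟨(K : ℝ), K.2, fun x hx y hy => hK.dist_le_mul x hx y hy⟩ ?_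
      rintro l ⟨_, hl⟩
      rw [div_le_iff₀ hd]
      exact hl a ha b hb
  generalize lipOn (fderiv ℝ f) Ω = L at hL ⊢
  obtain ⟨m, hm⟩ : ∃ m, m = midpoint ℝ x₁ x₂ := ⟨_, rfl⟩
  obtain ⟨v, hv⟩ : ∃ v : X, v = (2⁻¹ : ℝ) • (x₁ - x₂) := ⟨_, rfl⟩
  have hm' : m = (2⁻¹ : ℝ) • (x₁ + x₂) := by
    rw [hm, midpoint_eq_smul_add]; simp
  have h1 : m + (1 : ℝ) • v = x₁ := by rw [hm', hv]; module
  have h2 : m + (-1 : ℝ) • v = x₂ := by rw [hm', hv]; module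
  have hmem : ∀ t : ℝ, -1 ≤ t → t ≤ 1 → m + t • v ∈ Ω := by
    intro t h h'
    apply hseg
    refine ⟨(1 + t) / 2, (1 - t) / 2, by linarith, by linarith, by ring, ?_⟩
    rw [hm', hv]; module
  have hder : ∀ t : ℝ, -1 ≤ t → t ≤ 1 → HasDerivAt (fun s : ℝ => f (m + s • v))
      (fderiv ℝ f (m + t • v) v) t := by
    intro t h h'
    have hc : HasDerivAt (fun s : ℝ => m + s • v) v t := by
      simpa using ((hasDerivAt_id t).smul_const v).const_add m
    exact (hdiff _ (hmem t h h')).hasFDerivAt.comp_hasDerivAt t hc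
  have hg : ∀ t ∈ Icc (0 : ℝ) 1, HasDerivAt
      (fun s : ℝ => f (m + s • v) + f (m + (-s) • v) - (2 : ℝ) • f m)
      (fderiv ℝ f (m + t • v) v - fderiv ℝ f (m + (-t) • v) v) t := by
    intro t ht
    have a := hder t (by linarith [ht.1]) ht.2
    have b := (hder (-t) (by linarith [ht.2]) (by linarith [ht.1])).scomp t (hasDerivAt_neg t)
    have c := (a.add b).sub_const ((2 : ℝ) • f m)
    rw [neg_one_smul, ← sub_eq_add_neg] at c
    exact c
  have key := image_norm_le_of_norm_deriv_right_le_deriv_boundary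
    (f := fun s : ℝ => f (m + s • v) + f (m + (-s) • v) - (2 : ℝ) • f m)
    (f' := fun t => fderiv ℝ f (m + t • v) v - fderiv ℝ f (m + (-t) • v) v)
    (a := 0) (b := 1) (B := fun t => L * ‖v‖ ^ 2 * t ^ 2)
    (B' := fun t => L * ‖v‖ ^ 2 * (2 * t))
    (fun t ht => (hg t ht).continuousAt.continuousWithinAt)
    (fun t ht => (hg t ⟨ht.1, ht.2.le⟩).hasDerivWithinAt)
    (by
      have : f m + f m - (2 : ℝ) • f m = 0 := by module
      simp [this])
    (fun t => by simpa using (hasDerivAt_pow 2 t).const_mul (L * ‖v‖ ^ 2))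
    (by
      intro t ht
      have e := hL _ (hmem t (by linarith [ht.1]) ht.2.le) _
        (hmem (-t) (by linarith [ht.2]) (by linarith [ht.1]))
      have e2 : dist (m + t • v) (m + (-t) • v) = 2 * t * ‖v‖ := by
        rw [dist_eq_norm]
        have : m + t • v - (m + (-t) • v) = (2 * t) • v := by module
        rw [this, norm_smul, Real.norm_of_nonneg (by linarith [ht.1])]
      rw [e2, dist_eq_norm] at e
      have e3 := (fderiv ℝ f (m + t • v) - fderiv ℝ f (m + (-t) • v)).le_of_opNorm_le e v
      simp only [ContinuousLinearMap.sub_apply] at e3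
      refine e3.trans (le_of_eq ?_)
      ring)
    (right_mem_Icc.2 zero_le_one)
  simp only [h1, h2] at key
  rw [← hm]
  have e : midpoint ℝ (f x₁) (f x₂) - f m
      = (2⁻¹ : ℝ) • (f x₁ + f x₂ - (2 : ℝ) • f m) := by
    rw [midpoint_eq_smul_add, invOf_eq_inv]; module
  have hvn : ‖v‖ = 2⁻¹ * ‖x₁ - x₂‖ := by
    rw [hv, norm_smul]; norm_num
  rw [hvn] at key
  rw [e, norm_smul, Real.norm_of_nonneg (by norm_num)]
  linarith
end
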